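/- arXiv:1503.00918 — 2 statements merged into one kernel-verified Lean document; each statement's English description precedes it below -/
import Mathlib

section
/- Let x_{n−1} ≺ … ≺ x_1 ≺ y_{n−1} ≺ … ≺ y_1 ≺ z_{n−1} ≺ … ≺ z_1 ≺ t_{n−1} ≺ … ≺ t_1 ≺ α_{n−1} ≺ … ≺ α_1 be pairwise distinct points of P ordered anticlockwise on the circle (a pentagon configuration with vertices x, y, z, t, α and enough further points of P to choose right-side n-tuples). For 1 ≤ i, j ≤ n−1, set A_i = E(x^i, z^{n−i−1} | t_1, y_1) · E(x^{i−1}, z^{n−i} | y_1, t_1) and B_j = E(x^j, t^{n−j−1} | α_1, z_1) · E(x^{j−1}, t^{n−j} | z_1, α_1) in Q_n(P) (the images of the (i,n−i)-edge function of the edge xz and of the (j,n−j)-edge function of the edge xt). Then [A_i, B_j] = 1 if i = j = n−1, and [A_i, B_j] = 0 otherwise. -/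
noncomputable section

open scoped Classical
open MvPolynomial

set_option maxHeartbeats 1000000
set_option synthInstance.maxHeartbeats 400000

instance fact01 : Fact ((0:ℝ) < 1) := ⟨one_pos⟩

/-- The circle, modelled as `ℝ/ℤ`. -/
abbrev Circle1 : Type := AddCircle (1:ℝ)

/-- The coordinate in `[0,1)` of the point `x` of the circle obtained after removing the
point `o` and identifying the complement of `o` with an interval. -/
def coordAt (o x : Circle1) : ℝ := ((AddCircle.equivIco 1 0) (x - o) : ℝ)

/-- The sign `△` of a real number, as a rational number in `{-1, 0, 1}`. -/
def sgnQ (a : ℝ) : ℚ := if a < 0 then -1 else if a = 0 then 0 else 1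

/-- The linking number `J(rx, sy)` of the chords `rx` and `sy`, computed using the
cut point `o`. -/
def linkingAt (o r x s y : Circle1) : ℚ :=
  (1/2) * (sgnQ (coordAt o r - coordAt o x) * sgnQ (coordAt o r - coordAt o y)
        * sgnQ (coordAt o y - coordAt o x)
      - sgnQ (coordAt o r - coordAt o x) * sgnQ (coordAt o r - coordAt o s)
        * sgnQ (coordAt o s - coordAt o x))

lemma circle1_infinite : Infinite Circle1 := by
  have h : (Set.Ico (0:ℝ) (0+1)).Infinite := Set.Ico_infinite (by norm_num)
  haveI := h.to_subtype
  exact Infinite.of_injective (fun q : Set.Ico (0:ℝ) (0+1) => (AddCircle.equivIco 1 0).symm q)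
    ((AddCircle.equivIco 1 0).symm.injective)

lemma exists_cut (r x s y : Circle1) :
    ∃ o : Circle1, o ≠ r ∧ o ≠ x ∧ o ≠ s ∧ o ≠ y := by
  haveI : Infinite Circle1 := circle1_infinite
  have hfin : ({r, x, s, y} : Set Circle1).Finite :=
    (((Set.finite_singleton y).insert s).insert x).insert r
  obtain ⟨o, ho⟩ := hfin.infinite_compl.nonempty
  simp only [Set.mem_compl_iff, Set.mem_insert_iff, Set.mem_singleton_iff, not_or] at ho
  exact ⟨o, ho.1, ho.2.1, ho.2.2.1, ho.2.2.2⟩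

/-- The linking number `J(rx, sy)` of the chords `rx` and `sy` (computed with respect to
some cut point distinct from the four points; by the independence of the choice this is
the linking number). -/
def linkQ (r x s y : Circle1) : ℚ := linkingAt (exists_cut r x s y).choose r x s y

/-- The set of points of the circle `l`, listed in anticlockwise (cyclic) order:
there is a cut point `o` avoiding them such that the induced coordinates are
strictly increasing along the list. -/
def AnticlockwiseList (l : List Circle1) : Prop :=
  ∃ o : Circle1, (∀ p ∈ l, p ≠ o) ∧ (l.map (coordAt o)).Chain' (· < ·)

/-- Index type for the generators `xy` of the swapping ring of `P`
(one generator for each ordered pair of distinct points; the generators `xx`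
are identified with `0`). -/
abbrev SwapIdx (P : Set Circle1) : Type := {q : (↥P) × (↥P) // q.1 ≠ q.2}

/-- The swapping ring `Z(P)`: the polynomial ring over `K` on the generators `xy`,
`x ≠ y ∈ P` (this realizes the commutative ring generated by all ordered pairs `xy`
subject to the relations `xx = 0`). -/
abbrev SwapRing (K : Type) [Field K] (P : Set Circle1) : Type := MvPolynomial (SwapIdx P) K

/-- The generator `xy` of the swapping ring (equal to `0` when `x = y`). -/
def gen (K : Type) [Field K] (P : Set Circle1) (x y : ↥P) : SwapRing K P :=
  if h : x ≠ y then MvPolynomial.X (⟨(x, y), h⟩ : SwapIdx P) else 0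

/-- The value of the `(c1,c2)`-swapping bracket on two generators `rx` and `sy`:
`J(rx,sy) • (c1 • ry·sx + c2 • rx·sy)`. -/
def genBr (K : Type) [Field K] (P : Set Circle1) (c1 c2 : K) (g g' : SwapIdx P) :
    SwapRing K P :=
  ((linkQ g.1.1.1 g.1.2.1 g'.1.1.1 g'.1.2.1 : ℚ) : K) •
    (c1 • (gen K P g.1.1 g'.1.2 * gen K P g'.1.1 g.1.2)
      + c2 • (gen K P g.1.1 g.1.2 * gen K P g'.1.1 g'.1.2))

/-- The `(c1,c2)`-swapping bracket on `Z(P)`: the biderivation extending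
`{rx, sy} = J(rx,sy)·(c1·ry·sx + c2·rx·sy)` by the Leibniz rule in each argument.
The swapping bracket is the case `c1 = 1, c2 = 0`. -/
def swapBr (K : Type) [Field K] (P : Set Circle1) (c1 c2 : K) (a b : SwapRing K P) :
    SwapRing K P :=
  (MvPolynomial.mkDerivation K
    (fun g : SwapIdx P => (MvPolynomial.mkDerivation K (genBr K P c1 c2 g)) b)) a

/-- `Δ((x_1,…,x_m),(y_1,…,y_m)) = det (x_i y_j)` in the swapping ring. -/
def Dmat (K : Type) [Field K] (P : Set Circle1) (m : ℕ) (xs ys : Fin m → ↥P) :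
    SwapRing K P :=
  Matrix.det (Matrix.of fun i j => gen K P (xs i) (ys j))

/-- The ideal `R_n(P)` of `Z(P)` generated by all `(n+1)×(n+1)` determinants
`Δ((x_1,…,x_{n+1}),(y_1,…,y_{n+1}))`. -/
def Rideal (K : Type) [Field K] (P : Set Circle1) (n : ℕ) : Ideal (SwapRing K P) :=
  Ideal.span {D : SwapRing K P | ∃ xs ys : Fin (n+1) → ↥P, D = Dmat K P (n+1) xs ys}

/-- The rank `n` swapping ring `Z_n(P) = Z(P)/R_n(P)`. -/
abbrev ZnRing (K : Type) [Field K] (P : Set Circle1) (n : ℕ) : Type :=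
  SwapRing K P ⧸ Rideal K P n

/-- The quotient map `Z(P) → Z_n(P)`. -/
def toZn (K : Type) [Field K] (P : Set Circle1) (n : ℕ) :
    SwapRing K P →+* ZnRing K P n := Ideal.Quotient.mk (Rideal K P n)

/-- The total fraction ring `Q_n(P)` of the rank `n` swapping ring. -/
abbrev QnRing (K : Type) [Field K] (P : Set Circle1) (n : ℕ) : Type :=
  Localization (nonZeroDivisors (ZnRing K P n))

/-- The canonical map `Z(P) → Q_n(P)`. -/
def toQn (K : Type) [Field K] (P : Set Circle1) (n : ℕ) :
    SwapRing K P →+* QnRing K P n :=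
  (algebraMap (ZnRing K P n) (QnRing K P n)).comp (toZn K P n)

/-- `Bq` is the extension to the total fraction ring `Q_n(P)` of the `(c1,c2)`-swapping
bracket of the rank `n` swapping algebra: it agrees with the swapping bracket on the image
of `Z(P)` and satisfies the Leibniz rule in both arguments (these properties determine it
uniquely). -/
def IsQnBracket (K : Type) [Field K] (P : Set Circle1) (n : ℕ) (c1 c2 : K)
    (Bq : QnRing K P n → QnRing K P n → QnRing K P n) : Prop :=
  (∀ a b : SwapRing K P,
      Bq (toQn K P n a) (toQn K P n b) = toQn K P n (swapBr K P c1 c2 a b)) ∧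
  (∀ a b c : QnRing K P n, Bq (a * b) c = a * Bq b c + b * Bq a c) ∧
  (∀ a b c : QnRing K P n, Bq a (b * c) = b * Bq a c + c * Bq a b)

/-- The `n`-tuple `(x_1, …, x_a, y_1, …, y_b, z_1, …, z_{n-a-b})` built from three
families of points (families are indexed from `0`, i.e. `x 0 = x_1`). -/
def rows3 {α : Type*} {n : ℕ} (x y z : ℕ → α) (a b : ℕ) : Fin n → α :=
  fun i => if (i : ℕ) < a then x (i : ℕ)
    else if (i : ℕ) < a + b then y ((i : ℕ) - a)
    else z ((i : ℕ) - (a + b))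

/-- The `n`-tuple `(x_1, …, x_a, y_1, …, y_b, z_1, …, z_{n-1-a-b}, w)` built from three
families of points and a final point `w`. -/
def rows3s {α : Type*} {n : ℕ} (x y z : ℕ → α) (a b : ℕ) (w : α) : Fin n → α :=
  fun i => if (i : ℕ) < a then x (i : ℕ)
    else if (i : ℕ) < a + b then y ((i : ℕ) - a)
    else if (i : ℕ) < n - 1 then z ((i : ℕ) - (a + b))
    else w

/-- The `n`-tuple `(x_1, …, x_{n-1}, t)`. -/
def snocTup {α : Type*} {n : ℕ} (x : ℕ → α) (t : α) : Fin n → α :=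
  fun i => if (i : ℕ) < n - 1 then x (i : ℕ) else t

/-- The list `f_a, f_{a-1}, …, f_1` (descending enumeration). -/
def descPts (f : ℕ → Circle1) (a : ℕ) : List Circle1 := ((List.range a).map f).reverse

/-- The list `f_1, f_2, …, f_a` (ascending enumeration). -/
def ascPts (f : ℕ → Circle1) (a : ℕ) : List Circle1 := (List.range a).map f

/-- The `(n×n)`-determinant quotient `Δ(numR, v)/Δ(denR, v)` as an element of the total
fraction ring `Q_n(P)`. -/
def EQuot (K : Type) [Field K] (P : Set Circle1) (n : ℕ)
    (numR denR v : Fin n → ↥P)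
    (h : toZn K P n (Dmat K P n denR v) ∈ nonZeroDivisors (ZnRing K P n)) :
    QnRing K P n :=
  Localization.mk (toZn K P n (Dmat K P n numR v)) ⟨toZn K P n (Dmat K P n denR v), h⟩


/-- The image under the homomorphism `θ` of the `(i, n-i)`-edge function of the edge `xz`
of the quadrilateral `x y z t` (with `t1 = t_1` and `y1 = y_1`):
`E(x^i, z^{n-i-1} | t_1, y_1) · E(x^{i-1}, z^{n-i} | y_1, t_1)`,
computed with the right-side `n`-tuple `v`. -/
def edgeQuot (K : Type) [Field K] (P : Set Circle1) (n : ℕ) (x z : ℕ → ↥P)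
    (t1 y1 : ↥P) (i : ℕ) (v : Fin n → ↥P)
    (h1 : toZn K P n (Dmat K P n (rows3s x z x i (n-i-1) y1) v)
          ∈ nonZeroDivisors (ZnRing K P n))
    (h2 : toZn K P n (Dmat K P n (rows3s x z x (i-1) (n-i) t1) v)
          ∈ nonZeroDivisors (ZnRing K P n)) : QnRing K P n :=
  EQuot K P n (rows3s x z x i (n-i-1) t1) (rows3s x z x i (n-i-1) y1) v h1
    * EQuot K P n (rows3s x z x (i-1) (n-i) y1) (rows3s x z x (i-1) (n-i) t1) v h2

lemma coordAt_mem (o x : Circle1) : 0 ≤ coordAt o x ∧ coordAt o x < 1 := by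
  have h := ((AddCircle.equivIco (1:ℝ) 0) (x - o)).2
  simp only [Set.mem_Ico, zero_add] at h
  exact h

lemma coordAt_coe (o x : Circle1) : ((coordAt o x : ℝ) : Circle1) = x - o :=
  AddCircle.coe_equivIco

lemma coordAt_eq_of (o x : Circle1) (a : ℝ) (h0 : 0 ≤ a) (h1 : a < 1)
    (h : (a : Circle1) = x - o) : coordAt o x = a := by
  unfold coordAt
  rw [← h]
  exact AddCircle.equivIco_coe_of_mem (p := (1:ℝ)) (a := 0) (y := a) ⟨h0, by linarith⟩

lemma coordAt_change (o o' x : Circle1) :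
    coordAt o' x = if coordAt o x < coordAt o o' then coordAt o x - coordAt o o' + 1
      else coordAt o x - coordAt o o' := by
  have hx := coordAt_mem o x
  have he := coordAt_mem o o'
  split_ifs with h
  · apply coordAt_eq_of
    · linarith
    · linarith
    · have h1 : ((1:ℝ) : Circle1) = 0 := AddCircle.coe_period 1
      rw [AddCircle.coe_add, AddCircle.coe_sub, coordAt_coe, coordAt_coe, h1]
      abel
  · apply coordAt_eq_of
    · linarith
    · linarith
    · rw [AddCircle.coe_sub, coordAt_coe, coordAt_coe]
      abel

lemma coordAt_inj (o x y : Circle1) (h : coordAt o x = coordAt o y) : x = y := by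
  have h1 := coordAt_coe o x
  rw [h, coordAt_coe] at h1
  exact (sub_left_inj.mp h1).symm

def epsAt (o o' x : Circle1) : ℚ := if coordAt o x < coordAt o o' then -1 else 1

lemma epsAt_sq (o o' x : Circle1) : epsAt o o' x * epsAt o o' x = 1 := by
  unfold epsAt; split_ifs <;> norm_num

lemma sgn_change (o o' a b : Circle1) :
    sgnQ (coordAt o' a - coordAt o' b)
      = epsAt o o' a * epsAt o o' b * sgnQ (coordAt o a - coordAt o b) := by
  have ha := coordAt_mem o a
  have hb := coordAt_mem o b
  rw [coordAt_change o o' a, coordAt_change o o' b]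
  unfold epsAt sgnQ
  split_ifs <;> first | (norm_num; done) | (exfalso; linarith) | (exfalso; grind)

lemma linkingAt_indep (o o' r x s y : Circle1) :
    linkingAt o' r x s y = linkingAt o r x s y := by
  unfold linkingAt
  rw [sgn_change o o' r x, sgn_change o o' r y, sgn_change o o' y x, sgn_change o o' r s,
    sgn_change o o' s x]
  have hr := epsAt_sq o o' r
  have hx := epsAt_sq o o' x
  have hs := epsAt_sq o o' s
  have hy := epsAt_sq o o' y
  generalize epsAt o o' r = er at *
  generalize epsAt o o' x = ex at *
  generalize epsAt o o' s = es at *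
  generalize epsAt o o' y = ey at *
  have e1 : ∀ p q u : ℚ, er * ex * p * (er * ey * q) * (ey * ex * u) = p * q * u := by
    intro p q u
    calc _ = (er*er)*(ex*ex)*(ey*ey)*(p*q*u) := by ring
      _ = _ := by rw [hr, hx, hy]; ring
  have e2 : ∀ p q u : ℚ, er * ex * p * (er * es * q) * (es * ex * u) = p * q * u := by
    intro p q u
    calc _ = (er*er)*(ex*ex)*(es*es)*(p*q*u) := by ring
      _ = _ := by rw [hr, hx, hs]; ring
  rw [e1, e2]

lemma sgn_triple (a b c : ℝ) :
    sgnQ (a - b) * sgnQ (a - c) * sgnQ (c - b) = sgnQ (a - c) + sgnQ (c - b) - sgnQ (a - b) := by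
  unfold sgnQ
  split_ifs <;> first | (norm_num; done) | (exfalso; linarith) | (exfalso; grind)

lemma sgnQ_neg (a b : ℝ) : sgnQ (a - b) = - sgnQ (b - a) := by
  unfold sgnQ
  split_ifs <;> first | (norm_num; done) | (exfalso; linarith) | (exfalso; grind)

lemma linkQ_eq (o r x s y : Circle1) :
    linkQ r x s y = (1/2) * (sgnQ (coordAt o r - coordAt o y) - sgnQ (coordAt o x - coordAt o y)
      - sgnQ (coordAt o r - coordAt o s) + sgnQ (coordAt o x - coordAt o s)) := by
  unfold linkQ
  rw [linkingAt_indep o]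
  unfold linkingAt
  rw [sgn_triple, sgn_triple, sgnQ_neg (coordAt o y) (coordAt o x),
    sgnQ_neg (coordAt o s) (coordAt o x)]
  ring

lemma deriv_prod {K A : Type*} [CommRing K] [CommRing A] [Algebra K A] (D : Derivation K A A)
    {ι : Type*} [DecidableEq ι] (s : Finset ι) (f : ι → A) :
    D (∏ i ∈ s, f i) = ∑ i ∈ s, ∏ k ∈ s, if k = i then D (f k) else f k := by
  induction s using Finset.induction_on with
  | empty => simp
  | insert a s ha ih =>
    rw [Finset.prod_insert ha, D.leibniz, ih, Finset.sum_insert ha, Finset.prod_insert ha]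
    rw [if_pos rfl, add_comm]
    congr 1
    · rw [smul_eq_mul, mul_comm]
      congr 1
      apply Finset.prod_congr rfl
      intro k hk
      rw [if_neg]
      rintro rfl; exact ha hk
    · rw [smul_eq_mul, Finset.mul_sum]
      apply Finset.sum_congr rfl
      intro i hi
      rw [Finset.prod_insert ha, if_neg]
      rintro rfl; exact ha hi

lemma deriv_det {K A : Type*} [CommRing K] [CommRing A] [Algebra K A] (D : Derivation K A A)
    {n : ℕ} (M : Matrix (Fin n) (Fin n) A) :
    D M.det = ∑ i, ∑ k, M.adjugate k i * D (M i k) := by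
  have h1 : D M.det = ∑ i, (M.updateRow i (fun k => D (M i k))).det := by
    rw [← Matrix.det_transpose, Matrix.det_apply, map_sum]
    have : ∀ i, (M.updateRow i (fun k => D (M i k))).det
        = ∑ σ : Equiv.Perm (Fin n), Equiv.Perm.sign σ •
          ∏ k, if k = i then D (M k (σ k)) else M k (σ k) := by
      intro i
      rw [← Matrix.det_transpose, Matrix.det_apply]
      apply Finset.sum_congr rfl
      intro σ _
      congr 1
      apply Finset.prod_congr rfl
      intro k _
      rw [Matrix.transpose_apply, Matrix.updateRow_apply]
      split_ifs with h
      · rw [h]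
      · rfl
    simp_rw [this]
    rw [Finset.sum_comm]
    apply Finset.sum_congr rfl
    intro σ _
    rw [← Finset.smul_sum, ← deriv_prod D Finset.univ (fun k => M k (σ k))]
    simp only [Matrix.transpose_apply]
    exact map_zsmul D ((Equiv.Perm.sign σ : ℤˣ) : ℤ) _
  rw [h1]
  apply Finset.sum_congr rfl
  intro i _
  rw [← Matrix.cramer_transpose_apply, Matrix.cramer_eq_adjugate_mulVec,
    ← Matrix.adjugate_transpose]
  rfl

lemma mat_id {R : Type*} [CommRing R] {n : ℕ} (M N : Matrix (Fin n) (Fin n) R)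
    (s1 s2 s3 s4 : Fin n → Fin n → R) (h2 : ∀ k, s2 k k = 0) :
    (∑ i, ∑ k, M.adjugate k i * ∑ j, ∑ l, N.adjugate l j *
        ((s3 i l - s2 k l - s1 i j + s4 k j) * (M i l * N j k)))
      = N.det * (∑ i, ∑ l, s3 i l * M i l * M.adjugate l i)
        + M.det * (∑ j, ∑ k, s4 k j * N j k * N.adjugate k j)
        - ∑ j, ∑ i, s1 i j * ((N * M.adjugate) j i * (M * N.adjugate) i j) := by
  have hM : ∀ k l, ∑ i, M.adjugate k i * M i l = if k = l then M.det else 0 := by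
    intro k l
    rw [← Matrix.mul_apply, Matrix.adjugate_mul, Matrix.smul_apply, Matrix.one_apply]
    simp
  have hN : ∀ l k, ∑ j, N.adjugate l j * N j k = if l = k then N.det else 0 := by
    intro k l
    rw [← Matrix.mul_apply, Matrix.adjugate_mul, Matrix.smul_apply, Matrix.one_apply]
    simp
  have e3 : ∑ i, ∑ k, ∑ j, ∑ l, M.adjugate k i * N.adjugate l j * (s3 i l * (M i l * N j k))
      = N.det * (∑ i, ∑ l, s3 i l * M i l * M.adjugate l i) := by
    rw [Finset.mul_sum]
    apply Finset.sum_congr rfl; intro i _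
    have : ∀ k, ∑ j, ∑ l, M.adjugate k i * N.adjugate l j * (s3 i l * (M i l * N j k))
        = ∑ l, M.adjugate k i * s3 i l * M i l * (if l = k then N.det else 0) := by
      intro k
      rw [Finset.sum_comm]
      apply Finset.sum_congr rfl; intro l _
      rw [← hN, Finset.mul_sum]
      apply Finset.sum_congr rfl; intro j _
      ring
    simp_rw [this]
    simp only [mul_ite, mul_zero, Finset.sum_ite_eq', Finset.mem_univ, if_true]
    rw [Finset.mul_sum]
    apply Finset.sum_congr rfl; intro j _
    ring
  have e4 : ∑ i, ∑ k, ∑ j, ∑ l, M.adjugate k i * N.adjugate l j * (s4 k j * (M i l * N j k))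
      = M.det * (∑ j, ∑ k, s4 k j * N j k * N.adjugate k j) := by
    have : ∀ k j, ∑ i, ∑ l, M.adjugate k i * N.adjugate l j * (s4 k j * (M i l * N j k))
        = ∑ l, N.adjugate l j * s4 k j * N j k * (if k = l then M.det else 0) := by
      intro k j
      rw [Finset.sum_comm]
      apply Finset.sum_congr rfl; intro l _
      rw [← hM, Finset.mul_sum]
      apply Finset.sum_congr rfl; intro j _
      ring
    rw [Finset.sum_comm]
    rw [Finset.sum_congr rfl (fun k _ => Finset.sum_comm)]
    simp_rw [this]
    simp only [mul_ite, mul_zero, Finset.sum_ite_eq, Finset.mem_univ, if_true]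
    rw [Finset.sum_comm, Finset.mul_sum]
    apply Finset.sum_congr rfl; intro j _
    rw [Finset.mul_sum]
    apply Finset.sum_congr rfl; intro j _
    ring
  have e2 : ∑ i, ∑ k, ∑ j, ∑ l, M.adjugate k i * N.adjugate l j * (s2 k l * (M i l * N j k))
      = 0 := by
    rw [Finset.sum_comm]
    apply Finset.sum_eq_zero; intro k _
    rw [Finset.sum_comm]
    apply Finset.sum_eq_zero; intro j _
    rw [Finset.sum_comm]
    apply Finset.sum_eq_zero; intro l _
    have : ∑ i, M.adjugate k i * N.adjugate l j * (s2 k l * (M i l * N j k))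
        = N.adjugate l j * s2 k l * N j k * (if k = l then M.det else 0) := by
      rw [← hM, Finset.mul_sum]
      apply Finset.sum_congr rfl; intro i _
      ring
    rw [this]
    split_ifs with h
    · subst h; rw [h2]; ring
    · ring
  have e1 : ∑ i, ∑ k, ∑ j, ∑ l, M.adjugate k i * N.adjugate l j * (s1 i j * (M i l * N j k))
      = ∑ j, ∑ i, s1 i j * ((N * M.adjugate) j i * (M * N.adjugate) i j) := by
    rw [Finset.sum_comm' (s := Finset.univ) (t := fun _ => Finset.univ) (t' := Finset.univ)
      (s' := fun _ => Finset.univ) (by simp)]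
    rw [Finset.sum_comm]
    rw [Finset.sum_congr rfl (fun i _ => Finset.sum_comm)]
    rw [Finset.sum_comm]
    apply Finset.sum_congr rfl; intro j _
    apply Finset.sum_congr rfl; intro i _
    rw [Matrix.mul_apply, Matrix.mul_apply, Finset.sum_mul_sum, Finset.mul_sum]
    apply Finset.sum_congr rfl; intro k _
    rw [Finset.mul_sum]
    apply Finset.sum_congr rfl; intro l _
    ring
  rw [← e3, ← e4, ← e1, ← sub_zero (∑ i, ∑ k, ∑ j, ∑ l,
    M.adjugate k i * N.adjugate l j * (s3 i l * (M i l * N j k))), ← e2]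
  simp only [← Finset.sum_add_distrib, ← Finset.sum_sub_distrib]
  apply Finset.sum_congr rfl; intro i _
  apply Finset.sum_congr rfl; intro k _
  rw [Finset.mul_sum]
  apply Finset.sum_congr rfl; intro j _
  rw [Finset.mul_sum]
  apply Finset.sum_congr rfl; intro l _
  ring

lemma col_sum {R : Type*} [CommRing R] {n : ℕ} (M N : Matrix (Fin n) (Fin n) R)
    (s1 : Fin n → Fin n → R) (s : Fin n → R)
    (h : ∀ i j, (∃ j', j' ≠ j ∧ M i = N j') ∨ (∃ i', i' ≠ i ∧ M i' = N j) ∨ s1 i j = s j) :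
    ∑ j, ∑ i, s1 i j * ((N * M.adjugate) j i * (M * N.adjugate) i j)
      = (∑ j, s j) * (M.det * N.det) := by
  rw [Finset.sum_mul]
  apply Finset.sum_congr rfl; intro j _
  have e : M.det * N.det = ∑ i, (N * M.adjugate) j i * (M * N.adjugate) i j := by
    rw [← Matrix.mul_apply]
    rw [Matrix.mul_assoc, ← Matrix.mul_assoc M.adjugate, Matrix.adjugate_mul]
    simp [Matrix.mul_adjugate]
  rw [e, Finset.mul_sum]
  apply Finset.sum_congr rfl; intro i _
  rcases h i j with ⟨j', hj, h⟩ | ⟨i', hi, h⟩ | h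
  · have : (M * N.adjugate) i j = (N * N.adjugate) j' j := by
      simp only [Matrix.mul_apply, h]
    rw [this, Matrix.mul_adjugate]
    simp [hj]
  · have : (N * M.adjugate) j i = (M * M.adjugate) i' i := by
      simp only [Matrix.mul_apply, h]
    rw [this, Matrix.mul_adjugate]
    simp [hi]
  · rw [h]

def sgK (K : Type) [Field K] (o a b : Circle1) : K :=
  ((sgnQ (coordAt o a - coordAt o b) : ℚ) : K)

lemma sgK_self (K : Type) [Field K] (o a : Circle1) : sgK K o a a = 0 := by
  simp [sgK, sgnQ]

lemma sgK_neg (K : Type) [Field K] [CharZero K] (o a b : Circle1) :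
    sgK K o a b = - sgK K o b a := by
  unfold sgK
  rw [sgnQ_neg]
  push_cast
  rfl

def JK (K : Type) [Field K] (o r x s y : Circle1) : K :=
  (1/2) * (sgK K o r y - sgK K o x y - sgK K o r s + sgK K o x s)

lemma linkQ_cast (K : Type) [Field K] [CharZero K] (o r x s y : Circle1) :
    ((linkQ r x s y : ℚ) : K) = JK K o r x s y := by
  rw [linkQ_eq o]
  unfold JK sgK
  push_cast
  rfl

lemma der_gen (K : Type) [Field K] [CharZero K] (P : Set Circle1) (o : Circle1)
    (g : SwapIdx P) (s y : ↥P) :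
    (MvPolynomial.mkDerivation K (genBr K P 1 0 g)) (gen K P s y)
      = C (JK K o g.1.1 g.1.2 s y) * (gen K P g.1.1 y * gen K P s g.1.2) := by
  by_cases h : s ≠ y
  · have : gen K P s y = X (⟨(s, y), h⟩ : SwapIdx P) := by simp [gen, h]
    rw [this, MvPolynomial.mkDerivation_X]
    unfold genBr
    rw [linkQ_cast K o, MvPolynomial.smul_eq_C_mul]
    simp
  · push Not at h
    subst h
    have h1 : gen K P s s = 0 := by simp [gen]
    rw [h1, map_zero]
    have : JK K o g.1.1 g.1.2 s s = 0 := by unfold JK; ring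
    rw [this]
    simp

lemma swapBr_gen_det (K : Type) [Field K] [CharZero K] (P : Set Circle1) (o : Circle1) (n : ℕ)
    (r x : ↥P) (B v : Fin n → ↥P) (N : Matrix (Fin n) (Fin n) (SwapRing K P))
    (hN : N = Matrix.of fun i j => gen K P (B i) (v j)) :
    swapBr K P 1 0 (gen K P r x) N.det
      = ∑ j, ∑ l, N.adjugate l j *
        (C (JK K o r x (B j) (v l)) * (gen K P r (v l) * gen K P (B j) x)) := by
  by_cases h : r ≠ x
  · have : gen K P r x = X (⟨(r, x), h⟩ : SwapIdx P) := by simp [gen, h]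
    rw [this]
    unfold swapBr
    rw [MvPolynomial.mkDerivation_X, deriv_det]
    apply Finset.sum_congr rfl; intro j _
    apply Finset.sum_congr rfl; intro l _
    congr 1
    rw [hN, Matrix.of_apply, der_gen K P o]
  · push Not at h
    subst h
    have h1 : gen K P r r = 0 := by simp [gen]
    rw [h1]
    unfold swapBr
    rw [map_zero]
    symm
    apply Finset.sum_eq_zero; intro j _
    apply Finset.sum_eq_zero; intro l _
    have : JK K o r r (B j) (v l) = 0 := by unfold JK; ring
    rw [this]
    simp

def hterm (K : Type) [Field K] (P : Set Circle1) (o : Circle1) (n : ℕ)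
    (A v : Fin n → ↥P) : SwapRing K P :=
  ∑ i, ∑ l, C (1/2 * sgK K o (A i) (v l)) * gen K P (A i) (v l) *
    (Matrix.of fun i j => gen K P (A i) (v j)).adjugate l i

lemma swapBr_det (K : Type) [Field K] [CharZero K] (P : Set Circle1) (o : Circle1) (n : ℕ)
    (A B v : Fin n → ↥P) (s : Fin n → ℚ)
    (h : ∀ i j, (∃ j', j' ≠ j ∧ A i = B j') ∨ (∃ i', i' ≠ i ∧ A i' = B j) ∨
      sgnQ (coordAt o (A i) - coordAt o (B j)) = s j) :
    swapBr K P 1 0 (Dmat K P n A v) (Dmat K P n B v)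
      = C ((((-(1/2)) * ∑ j, s j : ℚ)) : K) * (Dmat K P n A v * Dmat K P n B v)
        + Dmat K P n B v * hterm K P o n A v - Dmat K P n A v * hterm K P o n B v := by
  set M : Matrix (Fin n) (Fin n) (SwapRing K P) :=
    Matrix.of fun i j => gen K P (A i) (v j) with hM
  set N : Matrix (Fin n) (Fin n) (SwapRing K P) :=
    Matrix.of fun i j => gen K P (B i) (v j) with hN
  have hdA : Dmat K P n A v = M.det := rfl
  have hdB : Dmat K P n B v = N.det := rfl
  rw [hdA, hdB]
  have e1 : swapBr K P 1 0 M.det N.det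
      = ∑ i, ∑ k, M.adjugate k i * swapBr K P 1 0 (M i k) N.det := by
    unfold swapBr
    rw [deriv_det]
  rw [e1]
  have e2 : ∀ i k, swapBr K P 1 0 (M i k) N.det = ∑ j, ∑ l, N.adjugate l j *
      ((C (1/2 * sgK K o (A i) (v l)) - C (1/2 * sgK K o (v k) (v l))
        - C (1/2 * sgK K o (A i) (B j)) + C (1/2 * sgK K o (v k) (B j))) * (M i l * N j k)) := by
    intro i k
    rw [show M i k = gen K P (A i) (v k) from rfl, swapBr_gen_det K P o n (A i) (v k) B v N hN]
    apply Finset.sum_congr rfl; intro j _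
    apply Finset.sum_congr rfl; intro l _
    rw [← C_sub, ← C_sub, ← C_add]
    rw [show M i l = gen K P (A i) (v l) from rfl, show N j k = gen K P (B j) (v k) from rfl]
    unfold JK
    congr 3
    ring
  simp_rw [e2]
  rw [mat_id M N (fun i j => C (1/2 * sgK K o (A i) (B j))) (fun k l => C (1/2 * sgK K o (v k) (v l)))
    (fun i l => C (1/2 * sgK K o (A i) (v l))) (fun k j => C (1/2 * sgK K o (v k) (B j)))
    (by intro k; simp [sgK_self])]
  rw [col_sum M N _ (fun j => C (1/2 * ((s j : ℚ) : K)))]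
  · have hA : hterm K P o n A v
      = ∑ i, ∑ l, C (1/2 * sgK K o (A i) (v l)) * M i l * M.adjugate l i := rfl
    have hB : hterm K P o n B v
      = - ∑ j, ∑ k, C (1/2 * sgK K o (v k) (B j)) * N j k * N.adjugate k j := by
      rw [← Finset.sum_neg_distrib]
      apply Finset.sum_congr rfl; intro j _
      rw [← Finset.sum_neg_distrib]
      apply Finset.sum_congr rfl; intro l _
      rw [sgK_neg K o (v l) (B j), mul_neg, C_neg]
      change _ * N j l * N.adjugate l j = _
      ring
    rw [hA, hB]
    have hC : (C ((((-(1/2)) * ∑ j, s j : ℚ)) : K) : SwapRing K P)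
        = - ∑ j, C (1/2 * ((s j : ℚ) : K)) := by
      rw [← map_sum, ← C_neg, ← Finset.mul_sum]
      push_cast
      congr 1
      ring
    rw [hC]
    ring
  · intro i j
    rcases h i j with ⟨j', hj, h⟩ | ⟨i', hi, h⟩ | h
    · left; refine ⟨j', hj, ?_⟩
      funext k
      change gen K P (A i) (v k) = gen K P (B j') (v k)
      rw [h]
    · right; left; refine ⟨i', hi, ?_⟩
      funext k
      change gen K P (A i') (v k) = gen K P (B j) (v k)
      rw [h]
    · right; right
      unfold sgK
      rw [h]

lemma quot_br {Q : Type*} [CommRing Q] (Bq : Q → Q → Q)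
    (hL : ∀ a b c, Bq (a * b) c = a * Bq b c + b * Bq a c)
    (hR : ∀ a b c, Bq a (b * c) = b * Bq a c + c * Bq a b)
    (F1 F2 G1 G2 E G H1 H2 L1 L2 t11 t12 t21 t22 : Q)
    (hE : F1 = E * F2) (hG : G1 = G * G2) (hF2 : IsUnit F2) (hG2 : IsUnit G2)
    (h11 : Bq F1 G1 = t11 * (F1 * G1) + G1 * H1 - F1 * L1)
    (h12 : Bq F1 G2 = t12 * (F1 * G2) + G2 * H1 - F1 * L2)
    (h21 : Bq F2 G1 = t21 * (F2 * G1) + G1 * H2 - F2 * L1)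
    (h22 : Bq F2 G2 = t22 * (F2 * G2) + G2 * H2 - F2 * L2) :
    Bq E G = (t11 - t12 - t21 + t22) * (E * G) := by
  subst hE hG
  rw [hL, hR, hR] at h11
  rw [hL] at h12
  rw [hR] at h21
  apply (hF2.mul hG2).mul_left_cancel
  linear_combination h11 - G * h12 - E * h21 + E * G * h22

lemma EQuot_spec (K : Type) [Field K] (P : Set Circle1) (n : ℕ)
    (numR denR v : Fin n → ↥P)
    (h : toZn K P n (Dmat K P n denR v) ∈ nonZeroDivisors (ZnRing K P n)) :
    toQn K P n (Dmat K P n numR v) = EQuot K P n numR denR v h * toQn K P n (Dmat K P n denR v)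
     := by
  unfold EQuot toQn
  rw [Localization.mk_eq_mk'_apply]
  exact (IsLocalization.mk'_spec (QnRing K P n) (toZn K P n (Dmat K P n numR v))
    (⟨toZn K P n (Dmat K P n denR v), h⟩ : nonZeroDivisors (ZnRing K P n))).symm

lemma toQn_unit (K : Type) [Field K] (P : Set Circle1) (n : ℕ)
    (denR v : Fin n → ↥P)
    (h : toZn K P n (Dmat K P n denR v) ∈ nonZeroDivisors (ZnRing K P n)) :
    IsUnit (toQn K P n (Dmat K P n denR v)) :=
  IsLocalization.map_units (QnRing K P n)
    (⟨toZn K P n (Dmat K P n denR v), h⟩ : nonZeroDivisors (ZnRing K P n))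

def lastQ (n p r : ℕ) (wt uz : Bool) : ℚ :=
  if uz then (if p < n - 1 then 0 else if wt ∧ r = n - 1 then 1 else -1) else -1

def sigQ (n p r : ℕ) (wt uz : Bool) (j : Fin n) : ℚ :=
  if (j : ℕ) < r then (if (j : ℕ) < p then 0 else 1)
  else if (j : ℕ) < n - 1 then (if wt ∧ (j : ℕ) = r then 0 else -1)
  else lastQ n p r wt uz

def xpart (n p r : ℕ) : ℚ :=
  ∑ j : Fin n, if (j : ℕ) < r then (if (j : ℕ) < p then 0 else 1)
    else if (j : ℕ) < n - 1 then -1 else 0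

lemma sum_sigQ (n p r : ℕ) (hn : 2 ≤ n) (hr : r ≤ n - 1) (wt uz : Bool) :
    ∑ j, sigQ n p r wt uz j
      = xpart n p r + (if wt ∧ r < n - 1 then 1 else 0) + lastQ n p r wt uz := by
  have h1 : (if wt ∧ r < n - 1 then (1:ℚ) else 0)
      = ∑ j : Fin n, if j = ⟨r, by omega⟩ then (if wt ∧ r < n - 1 then (1:ℚ) else 0) else 0 := by
    rw [Finset.sum_ite_eq' Finset.univ]; simp
  have h2 : lastQ n p r wt uz
      = ∑ j : Fin n, if j = ⟨n - 1, by omega⟩ then lastQ n p r wt uz else 0 := by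
    rw [Finset.sum_ite_eq' Finset.univ]; simp
  rw [h1, h2, xpart, ← Finset.sum_add_distrib, ← Finset.sum_add_distrib]
  apply Finset.sum_congr rfl
  intro j _
  have hj := j.2
  unfold sigQ
  simp only [Fin.ext_iff]
  split_ifs <;> first | (exfalso; omega) | (simp; done) | (exfalso; simp_all; done) | (exfalso; simp_all; omega)

lemma sgn_lt {a b : ℝ} (h : a < b) : sgnQ (a - b) = -1 := by
  unfold sgnQ; rw [if_pos (by linarith)]

lemma sgn_gt {a b : ℝ} (h : b < a) : sgnQ (a - b) = 1 := by
  unfold sgnQ; rw [if_neg (by linarith), if_neg (by intro h; linarith)]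

lemma sgn_eq (a : ℝ) : sgnQ (a - a) = 0 := by
  simp [sgnQ]

structure Cfg (n : ℕ) (f : Circle1 → ℝ) (x y z t al : ℕ → Circle1) : Prop where
  xy : ∀ k < n - 1, ∀ l < n - 1, f (x k) < f (y l)
  xz : ∀ k < n - 1, ∀ l < n - 1, f (x k) < f (z l)
  xt : ∀ k < n - 1, ∀ l < n - 1, f (x k) < f (t l)
  xal : ∀ k < n - 1, ∀ l < n - 1, f (x k) < f (al l)
  yz : ∀ k < n - 1, ∀ l < n - 1, f (y k) < f (z l)
  yt : ∀ k < n - 1, ∀ l < n - 1, f (y k) < f (t l)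
  yal : ∀ k < n - 1, ∀ l < n - 1, f (y k) < f (al l)
  zt : ∀ k < n - 1, ∀ l < n - 1, f (z k) < f (t l)
  zal : ∀ k < n - 1, ∀ l < n - 1, f (z k) < f (al l)
  tal : ∀ k < n - 1, ∀ l < n - 1, f (t k) < f (al l)

lemma cfg_of (n : ℕ) (x y z t al : ℕ → Circle1)
    (h : AnticlockwiseList (descPts x (n-1) ++ descPts y (n-1) ++ descPts z (n-1)
        ++ descPts t (n-1) ++ descPts al (n-1))) :
    ∃ o, Cfg n (coordAt o) x y z t al := by
  obtain ⟨o, -, h⟩ := h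
  refine ⟨o, ?_⟩
  have h' := List.isChain_iff_pairwise.mp h
  rw [List.pairwise_map] at h'
  have hm : ∀ (f : ℕ → Circle1) (k : ℕ), k < n - 1 → f k ∈ descPts f (n-1) := by
    intro f k hk
    simp only [descPts, List.mem_reverse, List.mem_map, List.mem_range]
    exact ⟨k, hk, rfl⟩
  simp only [List.pairwise_append, List.mem_append] at h'
  obtain ⟨⟨⟨⟨-, -, h1⟩, -, h2⟩, -, h3⟩, -, h4⟩ := h'
  constructor
  · intro k hk l hl; exact h1 _ (hm x k hk) _ (hm y l hl)
  · intro k hk l hl; exact h2 _ (by simp [hm x k hk]) _ (hm z l hl)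
  · intro k hk l hl; exact h3 _ (by simp [hm x k hk]) _ (hm t l hl)
  · intro k hk l hl; exact h4 _ (by simp [hm x k hk]) _ (hm al l hl)
  · intro k hk l hl; exact h2 _ (by simp [hm y k hk]) _ (hm z l hl)
  · intro k hk l hl; exact h3 _ (by simp [hm y k hk]) _ (hm t l hl)
  · intro k hk l hl; exact h4 _ (by simp [hm y k hk]) _ (hm al l hl)
  · intro k hk l hl; exact h3 _ (by simp [hm z k hk]) _ (hm t l hl)
  · intro k hk l hl; exact h4 _ (by simp [hm z k hk]) _ (hm al l hl)
  · intro k hk l hl; exact h4 _ (by simp [hm t k hk]) _ (hm al l hl)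

lemma rows_tri {α : Type*} {n : ℕ} (x z : ℕ → α) (p q : ℕ) (w : α) (hpq : p + q = n - 1)
    (i : Fin n) :
    ((i : ℕ) < p ∧ rows3s x z x p q w i = x i) ∨
    (p ≤ (i : ℕ) ∧ (i : ℕ) < n - 1 ∧ rows3s x z x p q w i = z ((i : ℕ) - p)) ∨
    ((i : ℕ) = n - 1 ∧ rows3s x z x p q w i = w) := by
  have hi := i.2
  unfold rows3s
  by_cases h1 : (i : ℕ) < p
  · left; exact ⟨h1, by rw [if_pos h1]⟩
  · by_cases h2 : (i : ℕ) < n - 1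
    · right; left
      exact ⟨by omega, h2, by rw [if_neg h1, if_pos (by omega)]⟩
    · right; right
      exact ⟨by omega, by rw [if_neg h1, if_neg (by omega), if_neg h2]⟩

lemma rows_x {α : Type*} {n : ℕ} (x z : ℕ → α) (p q : ℕ) (w : α) (i : Fin n)
    (h : (i : ℕ) < p) : rows3s x z x p q w i = x i := by
  unfold rows3s; rw [if_pos h]

lemma rows_z0 {α : Type*} {n : ℕ} (x z : ℕ → α) (p q : ℕ) (w : α) (i : Fin n)
    (h : (i : ℕ) = p) (hq : 0 < q) : rows3s x z x p q w i = z 0 := by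
  unfold rows3s; rw [if_neg (by omega), if_pos (by omega), h, Nat.sub_self]

lemma rows_w {α : Type*} {n : ℕ} (x z : ℕ → α) (p q : ℕ) (w : α) (hpq : p + q = n - 1) (i : Fin n)
    (h : (i : ℕ) = n - 1) : rows3s x z x p q w i = w := by
  unfold rows3s; rw [if_neg (by omega), if_neg (by omega), if_neg (by omega)]

lemma sig_last (n p r : ℕ) (wt uz : Bool) (j : Fin n) (hr : r ≤ n - 1) (h : (j : ℕ) = n - 1) :
    sigQ n p r wt uz j = lastQ n p r wt uz := by
  unfold sigQ; rw [if_neg (by omega), if_neg (by omega)]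

lemma last_al (n p r : ℕ) (wt : Bool) : lastQ n p r wt false = -1 := by
  simp [lastQ]

lemma last_z0 (n p r : ℕ) (wt : Bool) (h : p < n - 1) : lastQ n p r wt true = 0 := by
  simp [lastQ, h]

lemma last_z1 (n p r : ℕ) (wt : Bool) (h : ¬ p < n - 1) :
    lastQ n p r wt true = if wt ∧ r = n - 1 then 1 else -1 := by
  simp [lastQ, h]

lemma sig_t0 (n p r : ℕ) (uz : Bool) (j : Fin n) (h : (j : ℕ) = r) (h2 : (j : ℕ) < n - 1) :
    sigQ n p r true uz j = 0 := by
  unfold sigQ; rw [if_neg (by omega), if_pos h2, if_pos ⟨rfl, h⟩]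

lemma sig_tf (n p r : ℕ) (uz : Bool) (j : Fin n) (h : r ≤ (j : ℕ)) (h2 : (j : ℕ) < n - 1) :
    sigQ n p r false uz j = -1 := by
  unfold sigQ; rw [if_neg (by omega), if_pos h2, if_neg (by simp)]

lemma sig_ok (P : Set Circle1) (n : ℕ) (hn : 2 ≤ n) (f : Circle1 → ℝ) (x y z t al : ℕ → ↥P)
    (hc : Cfg n f (fun i => (x i : Circle1)) (fun i => (y i : Circle1)) (fun i => (z i : Circle1))
      (fun i => (t i : Circle1)) (fun i => (al i : Circle1)))
    (p q r s : ℕ) (hpq : p + q = n - 1) (hrs : r + s = n - 1) (wt uz : Bool)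
    (A B : Fin n → ↥P)
    (hA : A = rows3s x z x p q (if wt then t 0 else y 0))
    (hB : B = rows3s x t x r s (if uz then z 0 else al 0)) (i j : Fin n) :
    (∃ j', j' ≠ j ∧ A i = B j') ∨ (∃ i', i' ≠ i ∧ A i' = B j) ∨
      sgnQ (f (A i) - f (B j)) = sigQ n p r wt uz j := by
  obtain ⟨xy, xz, xt, xal, yz, yt, yal, zt, zal, tal⟩ := hc
  have hi := i.2
  have hj := j.2
  have h0 : 0 < n - 1 := by omega
  rcases rows_tri x z p q (if wt then t 0 else y 0) hpq i with ⟨hi1, ha⟩ | ⟨hi1, hi2, ha⟩ | ⟨hi1, ha⟩ <;>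
  rcases rows_tri x t r s (if uz then z 0 else al 0) hrs j with ⟨hj1, hb⟩ | ⟨hj1, hj2, hb⟩ | ⟨hj1, hb⟩ <;>
  rw [← hA] at ha <;> rw [← hB] at hb
  · -- x x
    by_cases hij : i = j
    · right; right
      subst hij
      rw [ha, hb, sgn_eq]
      simp [sigQ, hi1, hj1]
    · by_cases hir : (i : ℕ) < r
      · left
        refine ⟨i, hij, ?_⟩
        rw [ha, hB, rows_x x t r s _ i hir]
      · right; left
        refine ⟨j, fun h => hij h.symm, ?_⟩
        rw [hb, hA, rows_x x z p q _ j (by omega)]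
  · -- x t
    by_cases hw : wt = true ∧ (j : ℕ) = r
    · right; left
      refine ⟨⟨n-1, by omega⟩, ?_, ?_⟩
      · intro h; rw [← h] at hi1; simp at hi1; omega
      · rw [hb, hA, rows_w x z p q _ hpq _ rfl, hw.1, hw.2]; simp
    · right; right
      rw [ha, hb, sgn_lt (xt _ (by omega) _ (by omega)), sigQ, if_neg (by omega), if_pos hj2,
        if_neg hw]
  · -- x u
    by_cases hir : (i : ℕ) < r
    · left
      refine ⟨i, ?_, ?_⟩
      · intro h; subst h; omega
      · rw [ha, hB, rows_x x t r s _ i hir]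
    cases uz
    · right; right
      rw [ha, hb, sig_last n p r _ _ j (by omega) hj1, last_al]
      simpa using sgn_lt (xal _ (by omega) _ h0)
    · by_cases hp : p < n - 1
      · right; left
        refine ⟨⟨p, by omega⟩, ?_, ?_⟩
        · intro h; rw [← h] at hi1; simp at hi1
        · rw [hb, hA, rows_z0 x z p q _ _ rfl (by omega)]; simp
      · right; right
        rw [ha, hb, sig_last n p r _ _ j (by omega) hj1, last_z1 n p r _ hp,
          if_neg (by rintro ⟨-, h⟩; omega : ¬ (wt = true ∧ r = n - 1))]
        simpa using sgn_lt (xz _ (by omega) _ h0)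
  · -- z x
    by_cases hjp : (j : ℕ) < p
    · right; left
      refine ⟨j, ?_, ?_⟩
      · intro h; subst h; omega
      · rw [hb, hA, rows_x x z p q _ j hjp]
    · right; right
      rw [ha, hb, sgn_gt (xz _ (by omega) _ (by omega)), sigQ, if_pos hj1, if_neg hjp]
  · -- z t
    by_cases hw : wt = true ∧ (j : ℕ) = r
    · right; left
      refine ⟨⟨n-1, by omega⟩, ?_, ?_⟩
      · intro h; rw [← h] at hi2; simp at hi2
      · rw [hb, hA, rows_w x z p q _ hpq _ rfl, hw.1, hw.2]; simp
    · right; right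
      rw [ha, hb, sgn_lt (zt _ (by omega) _ (by omega)), sigQ, if_neg (by omega), if_pos hj2,
        if_neg hw]
  · -- z u
    cases uz
    · right; right
      rw [ha, hb, sig_last n p r _ _ j (by omega) hj1, last_al]
      simpa using sgn_lt (zal _ (by omega) _ h0)
    · by_cases hip : (i : ℕ) = p
      · right; right
        rw [ha, hb, hip, sig_last n p r _ _ j (by omega) hj1, last_z0 n p r _ (by omega)]
        simp [sgnQ]
      · right; left
        refine ⟨⟨p, by omega⟩, ?_, ?_⟩
        · intro h; rw [← h] at hip; simp at hip
        · rw [hb, hA, rows_z0 x z p q _ _ rfl (by omega)]; simp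
  · -- w x
    by_cases hjp : (j : ℕ) < p
    · right; left
      refine ⟨j, ?_, ?_⟩
      · intro h; subst h; omega
      · rw [hb, hA, rows_x x z p q _ j hjp]
    · right; right
      rw [ha, hb, sigQ, if_pos hj1, if_neg hjp]
      cases wt
      · simpa using sgn_gt (xy _ (by omega) _ h0)
      · simpa using sgn_gt (xt _ (by omega) _ h0)
  · -- w t
    cases wt
    · right; right
      rw [ha, hb, sig_tf n p r _ j hj1 hj2]
      simpa using sgn_lt (yt _ h0 _ (by omega))
    · by_cases hjr : (j : ℕ) = r
      · right; right
        rw [ha, hb, sig_t0 n p r _ j hjr hj2, hjr]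
        simp [sgnQ]
      · left
        refine ⟨⟨r, by omega⟩, ?_, ?_⟩
        · intro h; rw [← h] at hjr; simp at hjr
        · rw [ha, hB, rows_z0 x t r s _ _ rfl (by omega)]; simp
  · -- w u
    by_cases hts : wt = true ∧ r < n - 1
    · left
      refine ⟨⟨r, by omega⟩, ?_, ?_⟩
      · intro h; rw [← h] at hj1; simp at hj1; omega
      · rw [ha, hB, rows_z0 x t r s _ _ rfl (by omega), hts.1]; simp
    cases uz
    · right; right
      rw [ha, hb, sig_last n p r _ _ j (by omega) hj1, last_al]
      cases wt
      · simpa using sgn_lt (yal _ h0 _ h0)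
      · simpa using sgn_lt (tal _ h0 _ h0)
    · by_cases hp : p < n - 1
      · right; left
        refine ⟨⟨p, by omega⟩, ?_, ?_⟩
        · intro h; rw [← h] at hi1; simp at hi1; omega
        · rw [hb, hA, rows_z0 x z p q _ _ rfl (by omega)]; simp
      · right; right
        rw [ha, hb, sig_last n p r _ _ j (by omega) hj1, last_z1 n p r _ hp]
        cases wt
        · simpa using sgn_lt (yz _ h0 _ h0)
        · have hr : r = n - 1 := by
            by_contra h; exact hts ⟨rfl, by omega⟩
          simpa [hr] using sgn_gt (zt _ h0 _ h0)

def tauQ (n p r : ℕ) (wt uz : Bool) : ℚ := -(1/2) * ∑ j, sigQ n p r wt uz j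

def kap (K : Type) [Field K] (P : Set Circle1) (n : ℕ) : K →+* QnRing K P n :=
  (toQn K P n).comp C

lemma total_const (n : ℕ) (hn : 2 ≤ n) (i j : ℕ) (hi1 : 1 ≤ i) (hi2 : i ≤ n-1)
    (hj1 : 1 ≤ j) (hj2 : j ≤ n-1) :
    (tauQ n i j true false - tauQ n i j true true - tauQ n i j false false + tauQ n i j false true)
    + (tauQ n i (j-1) true true - tauQ n i (j-1) true false - tauQ n i (j-1) false true
        + tauQ n i (j-1) false false)
    + (tauQ n (i-1) j false false - tauQ n (i-1) j false true - tauQ n (i-1) j true false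
        + tauQ n (i-1) j true true)
    + (tauQ n (i-1) (j-1) false true - tauQ n (i-1) (j-1) false false - tauQ n (i-1) (j-1) true true
        + tauQ n (i-1) (j-1) true false)
    = if i = n-1 ∧ j = n-1 then 1 else 0 := by
  unfold tauQ
  simp only [sum_sigQ n _ j hn hj2, sum_sigQ n _ (j-1) hn (by omega)]
  simp only [lastQ, if_true, true_and, false_and, if_false, Bool.false_eq_true]
  have h1 : i - 1 < n - 1 := by omega
  have h2 : j - 1 < n - 1 := by omega
  have h3 : j - 1 ≠ n - 1 := by omega
  simp only [h1, h2, h3, if_true, if_false]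
  by_cases hi : i = n - 1 <;> by_cases hj : j = n - 1
  · have a : ¬ (i < n - 1) := by omega
    have b : ¬ (j < n - 1) := by omega
    simp only [a, b, if_false]; rw [if_pos hj, if_pos (⟨hi, hj⟩ : i = n - 1 ∧ j = n - 1)]; ring
  · have a : ¬ (i < n - 1) := by omega
    simp only [a, hj, if_false, and_false]; ring
  · have a : i < n - 1 := by omega
    simp only [a, hi, if_true, if_false, false_and]; ring
  · have a : i < n - 1 := by omega
    simp only [a, hi, if_true, if_false, false_and]; ring

lemma final_br (K : Type) [Field K] [CharZero K]
    (P : Set Circle1) (n : ℕ) (hn : 2 ≤ n) (x y z t al : ℕ → ↥P)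
    (hcfg : AnticlockwiseList
      (descPts (fun i => ((x i : Circle1))) (n-1) ++ descPts (fun i => ((y i : Circle1))) (n-1)
        ++ descPts (fun i => ((z i : Circle1))) (n-1)
        ++ descPts (fun i => ((t i : Circle1))) (n-1)
        ++ descPts (fun i => ((al i : Circle1))) (n-1)))
    (i j : ℕ) (hi1 : 1 ≤ i) (hi2 : i ≤ n-1) (hj1 : 1 ≤ j) (hj2 : j ≤ n-1)
    (Bq : QnRing K P n → QnRing K P n → QnRing K P n) (hBq : IsQnBracket K P n 1 0 Bq)
    (v : Fin n → ↥P)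
    (hA1 : toZn K P n (Dmat K P n (rows3s x z x i (n-i-1) (y 0)) v)
          ∈ nonZeroDivisors (ZnRing K P n))
    (hA2 : toZn K P n (Dmat K P n (rows3s x z x (i-1) (n-i) (t 0)) v)
          ∈ nonZeroDivisors (ZnRing K P n))
    (hB1 : toZn K P n (Dmat K P n (rows3s x t x j (n-j-1) (z 0)) v)
          ∈ nonZeroDivisors (ZnRing K P n))
    (hB2 : toZn K P n (Dmat K P n (rows3s x t x (j-1) (n-j) (al 0)) v)
          ∈ nonZeroDivisors (ZnRing K P n)) :
    Bq (edgeQuot K P n x z (t 0) (y 0) i v hA1 hA2) (edgeQuot K P n x t (al 0) (z 0) j v hB1 hB2)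
      = kap K P n ((if i = n-1 ∧ j = n-1 then 1 else 0 : ℚ) : K) *
        (edgeQuot K P n x z (t 0) (y 0) i v hA1 hA2
          * edgeQuot K P n x t (al 0) (z 0) j v hB1 hB2) := by
  obtain ⟨o, hc⟩ := cfg_of n _ _ _ _ _ hcfg
  obtain ⟨hex, hL, hR⟩ := hBq
  have key : ∀ (p q r s : ℕ) (hpq : p + q = n - 1) (hrs : r + s = n - 1) (wt uz : Bool)
      (A B : Fin n → ↥P)
      (hA : A = rows3s x z x p q (if wt then t 0 else y 0))
      (hB : B = rows3s x t x r s (if uz then z 0 else al 0)),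
      Bq (toQn K P n (Dmat K P n A v)) (toQn K P n (Dmat K P n B v))
        = kap K P n ((tauQ n p r wt uz : ℚ) : K)
            * (toQn K P n (Dmat K P n A v) * toQn K P n (Dmat K P n B v))
          + toQn K P n (Dmat K P n B v) * toQn K P n (hterm K P o n A v)
          - toQn K P n (Dmat K P n A v) * toQn K P n (hterm K P o n B v) := by
    intro p q r s hpq hrs wt uz A B hA hB
    rw [hex, swapBr_det K P o n A B v (sigQ n p r wt uz)
      (sig_ok P n hn (coordAt o) x y z t al hc p q r s hpq hrs wt uz A B hA hB)]
    rw [map_sub, map_add, map_mul, map_mul, map_mul, map_mul]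
    rfl
  have hi3 : i + (n - i - 1) = n - 1 := by omega
  have hi4 : (i - 1) + (n - i) = n - 1 := by omega
  have hj3 : j + (n - j - 1) = n - 1 := by omega
  have hj4 : (j - 1) + (n - j) = n - 1 := by omega
  have b11 := quot_br Bq hL hR _ _ _ _ _ _ _ _ _ _ _ _ _ _
    (EQuot_spec K P n (rows3s x z x i (n-i-1) (t 0)) _ v hA1)
    (EQuot_spec K P n (rows3s x t x j (n-j-1) (al 0)) _ v hB1)
    (toQn_unit K P n _ v hA1) (toQn_unit K P n _ v hB1)
    (key _ _ _ _ hi3 hj3 true false _ _ rfl rfl) (key _ _ _ _ hi3 hj3 true true _ _ rfl rfl)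
    (key _ _ _ _ hi3 hj3 false false _ _ rfl rfl) (key _ _ _ _ hi3 hj3 false true _ _ rfl rfl)
  have b12 := quot_br Bq hL hR _ _ _ _ _ _ _ _ _ _ _ _ _ _
    (EQuot_spec K P n (rows3s x z x i (n-i-1) (t 0)) _ v hA1)
    (EQuot_spec K P n (rows3s x t x (j-1) (n-j) (z 0)) _ v hB2)
    (toQn_unit K P n _ v hA1) (toQn_unit K P n _ v hB2)
    (key _ _ _ _ hi3 hj4 true true _ _ rfl rfl) (key _ _ _ _ hi3 hj4 true false _ _ rfl rfl)
    (key _ _ _ _ hi3 hj4 false true _ _ rfl rfl) (key _ _ _ _ hi3 hj4 false false _ _ rfl rfl)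
  have b21 := quot_br Bq hL hR _ _ _ _ _ _ _ _ _ _ _ _ _ _
    (EQuot_spec K P n (rows3s x z x (i-1) (n-i) (y 0)) _ v hA2)
    (EQuot_spec K P n (rows3s x t x j (n-j-1) (al 0)) _ v hB1)
    (toQn_unit K P n _ v hA2) (toQn_unit K P n _ v hB1)
    (key _ _ _ _ hi4 hj3 false false _ _ rfl rfl) (key _ _ _ _ hi4 hj3 false true _ _ rfl rfl)
    (key _ _ _ _ hi4 hj3 true false _ _ rfl rfl) (key _ _ _ _ hi4 hj3 true true _ _ rfl rfl)
  have b22 := quot_br Bq hL hR _ _ _ _ _ _ _ _ _ _ _ _ _ _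
    (EQuot_spec K P n (rows3s x z x (i-1) (n-i) (y 0)) _ v hA2)
    (EQuot_spec K P n (rows3s x t x (j-1) (n-j) (z 0)) _ v hB2)
    (toQn_unit K P n _ v hA2) (toQn_unit K P n _ v hB2)
    (key _ _ _ _ hi4 hj4 false true _ _ rfl rfl) (key _ _ _ _ hi4 hj4 false false _ _ rfl rfl)
    (key _ _ _ _ hi4 hj4 true true _ _ rfl rfl) (key _ _ _ _ hi4 hj4 true false _ _ rfl rfl)
  rw [← total_const n hn i j hi1 hi2 hj1 hj2]
  unfold edgeQuot
  rw [hL, hR, hR, b11, b12, b21, b22]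
  push_cast
  simp only [map_add, map_sub]
  ring

/-- In the pentagon configuration
`x_{n-1} ≺ … ≺ x_1 ≺ y_{n-1} ≺ … ≺ y_1 ≺ z_{n-1} ≺ … ≺ z_1 ≺ t_{n-1} ≺ … ≺ t_1 ≺
α_{n-1} ≺ … ≺ α_1` of pairwise distinct points of `P` ordered anticlockwise, let
`A_i = E(x^i, z^{n-i-1} | t_1, y_1) · E(x^{i-1}, z^{n-i} | y_1, t_1)` and
`B_j = E(x^j, t^{n-j-1} | α_1, z_1) · E(x^{j-1}, t^{n-j} | z_1, α_1)`.
Then the normalized extended swapping bracket `[A_i, B_j]` equals `1` if `i = j = n-1`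
and `0` otherwise. -/
theorem bracket_edge_functions_adjacent_edges (K : Type) [Field K] [CharZero K]
    (P : Set Circle1) (n : ℕ) (hn : 2 ≤ n) (x y z t al : ℕ → ↥P)
    (hcfg : AnticlockwiseList
      (descPts (fun i => ((x i : Circle1))) (n-1) ++ descPts (fun i => ((y i : Circle1))) (n-1)
        ++ descPts (fun i => ((z i : Circle1))) (n-1)
        ++ descPts (fun i => ((t i : Circle1))) (n-1)
        ++ descPts (fun i => ((al i : Circle1))) (n-1)))
    (i j : ℕ) (hi1 : 1 ≤ i) (hi2 : i ≤ n-1) (hj1 : 1 ≤ j) (hj2 : j ≤ n-1) :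
    ∀ Bq : QnRing K P n → QnRing K P n → QnRing K P n, IsQnBracket K P n 1 0 Bq →
    ∀ v : Fin n → ↥P, Function.Injective v →
    ∀ (hA1 : toZn K P n (Dmat K P n (rows3s x z x i (n-i-1) (y 0)) v)
          ∈ nonZeroDivisors (ZnRing K P n))
      (hA2 : toZn K P n (Dmat K P n (rows3s x z x (i-1) (n-i) (t 0)) v)
          ∈ nonZeroDivisors (ZnRing K P n))
      (hB1 : toZn K P n (Dmat K P n (rows3s x t x j (n-j-1) (z 0)) v)
          ∈ nonZeroDivisors (ZnRing K P n))
      (hB2 : toZn K P n (Dmat K P n (rows3s x t x (j-1) (n-j) (al 0)) v)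
          ∈ nonZeroDivisors (ZnRing K P n)),
      (i = n-1 ∧ j = n-1 →
        Bq (edgeQuot K P n x z (t 0) (y 0) i v hA1 hA2)
           (edgeQuot K P n x t (al 0) (z 0) j v hB1 hB2)
          = edgeQuot K P n x z (t 0) (y 0) i v hA1 hA2
            * edgeQuot K P n x t (al 0) (z 0) j v hB1 hB2) ∧
      (¬(i = n-1 ∧ j = n-1) →
        Bq (edgeQuot K P n x z (t 0) (y 0) i v hA1 hA2)
           (edgeQuot K P n x t (al 0) (z 0) j v hB1 hB2) = 0) := by
  intro Bq hBq v _ hA1 hA2 hB1 hB2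
  have h := final_br K P n hn x y z t al hcfg i j hi1 hi2 hj1 hj2 Bq hBq v hA1 hA2 hB1 hB2
  constructor
  · intro hij
    rw [h, if_pos hij, Rat.cast_one, map_one, one_mul]
  · intro hij
    rw [h, if_neg hij, Rat.cast_zero, map_zero, zero_mul]

end
end

section
/- Let x_{n−1} ≺ … ≺ x_1 ≺ y_{n−1} ≺ … ≺ y_1 ≺ z_{n−1} ≺ … ≺ z_1 ≺ t_{n−1} ≺ … ≺ t_1 be pairwise distinct points of P ordered anticlockwise on the circle (a quadrilateral configuration with vertices x, y, z, t and enough further points of P to choose right-side n-tuples). For positive integers m, l, p with m + l + p = n, set Θ(m,l,p) = E(x^{m+1}, y^{l−1}, z^{p−1} | y_l, z_p) · E(x^{m−1}, y^{l+1}, z^{p−1} | z_p, x_m) · E(x^{m−1}, y^{l−1}, z^{p+1} | x_m, y_l), and for 1 ≤ i ≤ n−1 set B_i = E(x^i, z^{n−i−1} | t_1, y_1) · E(x^{i−1}, z^{n−i} | y_1, t_1), both in Q_n(P). Then [Θ(m,l,p), B_i] = −1 if (m,l,p) = (i−1, 1, n−i), [Θ(m,l,p), B_i] = 1 if (m,l,p)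 = (i, 1, n−i−1), and [Θ(m,l,p), B_i] = 0 in all other cases. -/
noncomputable section

open scoped Classical
open MvPolynomial

set_option maxHeartbeats 1000000
set_option synthInstance.maxHeartbeats 400000

/-- The image `Θ(m,l,p)` under the homomorphism `θ` of the `(m,l,p)`-triple ratio of the
triangle `xyz`:
`E(x^{m+1},y^{l-1},z^{p-1} | y_l, z_p) · E(x^{m-1},y^{l+1},z^{p-1} | z_p, x_m)
  · E(x^{m-1},y^{l-1},z^{p+1} | x_m, y_l)`,
computed with the right-side `n`-tuple `v`.  (Families are indexed from `0`, so `x_m` is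
`x (m-1)`, etc.) -/
def thetaTri (K : Type) [Field K] (P : Set Circle1) (n : ℕ) (x y z : ℕ → ↥P)
    (m l p : ℕ) (v : Fin n → ↥P)
    (h1 : toZn K P n (Dmat K P n (rows3s x y z (m+1) (l-1) (z (p-1))) v)
          ∈ nonZeroDivisors (ZnRing K P n))
    (h2 : toZn K P n (Dmat K P n (rows3s x y z (m-1) (l+1) (x (m-1))) v)
          ∈ nonZeroDivisors (ZnRing K P n))
    (h3 : toZn K P n (Dmat K P n (rows3s x y z (m-1) (l-1) (y (l-1))) v)
          ∈ nonZeroDivisors (ZnRing K P n)) : QnRing K P n :=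
  EQuot K P n (rows3s x y z (m+1) (l-1) (y (l-1))) (rows3s x y z (m+1) (l-1) (z (p-1))) v h1
    * EQuot K P n (rows3s x y z (m-1) (l+1) (z (p-1))) (rows3s x y z (m-1) (l+1) (x (m-1))) v h2
    * EQuot K P n (rows3s x y z (m-1) (l-1) (x (m-1))) (rows3s x y z (m-1) (l-1) (y (l-1))) v h3

def phiZ (o p q : Circle1) : ℤ :=
  if coordAt o q < coordAt o p then -1 else if coordAt o p < coordAt o q then 1 else 0

lemma sgnQ_phi (o p q : Circle1) : sgnQ (coordAt o q - coordAt o p) = (phiZ o p q : ℚ) := by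
  unfold sgnQ phiZ
  split_ifs <;> grind

lemma phiZ_self (o p : Circle1) : phiZ o p p = 0 := by simp [phiZ]

lemma phiZ_antisymm (o p q : Circle1) : phiZ o p q = - phiZ o q p := by
  unfold phiZ
  split_ifs <;> first | (exfalso; linarith) | norm_num

lemma coordAt_shift (o o' x : Circle1) :
    coordAt o' x = coordAt o x + coordAt o' o ∨ coordAt o' x = coordAt o x + coordAt o' o - 1 := by
  have h : ((coordAt o' x - coordAt o x - coordAt o' o : ℝ) : Circle1) = 0 := by
    rw [AddCircle.coe_sub, AddCircle.coe_sub, coordAt_coe, coordAt_coe, coordAt_coe]; abel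
  rw [AddCircle.coe_eq_zero_iff] at h
  obtain ⟨k, hk⟩ := h
  simp only [zsmul_eq_mul, mul_one] at hk
  have h1 := coordAt_mem o x
  have h2 := coordAt_mem o' x
  have h3 := coordAt_mem o' o
  have hk1 : (-2:ℝ) < k := by linarith
  have hk2 : (k:ℝ) < 1 := by linarith
  have hk1' : -2 < k := by exact_mod_cast hk1
  have hk2' : k < 1 := by exact_mod_cast hk2
  have : k = 0 ∨ k = -1 := by omega
  rcases this with rfl | rfl
  · left; push_cast at hk; linarith
  · right; push_cast at hk; linarith

def kShift (o o' x : Circle1) : ℤ := if coordAt o' x = coordAt o x + coordAt o' o then 0 else 2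

lemma phi_shift (o o' p q : Circle1) :
    phiZ o' p q = phiZ o p q + kShift o o' p - kShift o o' q := by
  have hp := coordAt_shift o o' p
  have hq := coordAt_shift o o' q
  have h1 := coordAt_mem o p
  have h2 := coordAt_mem o' p
  have h3 := coordAt_mem o q
  have h4 := coordAt_mem o' q
  have e0 : kShift o o' p = 0 ∧ coordAt o' p = coordAt o p + coordAt o' o ∨
      kShift o o' p = 2 ∧ coordAt o' p = coordAt o p + coordAt o' o - 1 := by
    unfold kShift; split_ifs <;> tauto
  have e1 : kShift o o' q = 0 ∧ coordAt o' q = coordAt o q + coordAt o' o ∨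
      kShift o o' q = 2 ∧ coordAt o' q = coordAt o q + coordAt o' o - 1 := by
    unfold kShift; split_ifs <;> tauto
  rcases e0 with ⟨ek, ep⟩ | ⟨ek, ep⟩ <;> rcases e1 with ⟨fk, fq⟩ | ⟨fk, fq⟩ <;> rw [ek, fk] <;>
    unfold phiZ <;> split_ifs <;> first | (exfalso; linarith) | norm_num

lemma linkingAt_phi (o r x s y : Circle1) :
    2 * linkingAt o r x s y = ((phiZ o r s + phiZ o x y - phiZ o r y - phiZ o x s : ℤ) : ℚ) := by
  have key : ∀ r x y : Circle1, sgnQ (coordAt o r - coordAt o x) * sgnQ (coordAt o r - coordAt o y)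
        * sgnQ (coordAt o y - coordAt o x)
        = ((phiZ o r x + phiZ o x y + phiZ o y r : ℤ) : ℚ) := by
    intro r x y
    rw [sgnQ_phi, sgnQ_phi, sgnQ_phi]
    norm_cast
    unfold phiZ
    split_ifs <;> first | (exfalso; linarith) | norm_num
  unfold linkingAt
  rw [key, key, phiZ_antisymm o r y, phiZ_antisymm o r s, phiZ_antisymm o x s]
  push_cast
  have := phiZ_antisymm o s x
  rw [phiZ_antisymm o s x]
  push_cast
  ring

lemma linkQ_phi (o r x s y : Circle1) :
    2 * linkQ r x s y = ((phiZ o r s + phiZ o x y - phiZ o r y - phiZ o x s : ℤ) : ℚ) := by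
  unfold linkQ
  rw [linkingAt_phi]
  congr 1
  simp only [phi_shift o (exists_cut r x s y).choose]
  ring

lemma der_prod {K A ι : Type*} [DecidableEq ι] [CommRing K] [CommRing A] [Algebra K A] (D : Derivation K A A)
    (s : Finset ι) (f : ι → A) :
    D (∏ i ∈ s, f i) = ∑ i ∈ s, (∏ j ∈ s.erase i, f j) * D (f i) := by
  induction s using Finset.induction_on with
  | empty => simp
  | insert a s ha ih =>
    rw [Finset.prod_insert ha, D.leibniz, ih, Finset.sum_insert ha, Finset.erase_insert ha]
    simp only [smul_eq_mul]
    rw [add_comm, Finset.mul_sum]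
    congr 1
    apply Finset.sum_congr rfl
    intro i hi
    have hne : a ≠ i := by rintro rfl; exact ha hi
    rw [Finset.erase_insert_of_ne hne, Finset.prod_insert (by simp [ha])]
    ring

lemma der_det {K A : Type*} [CommRing K] [CommRing A] [Algebra K A] (D : Derivation K A A)
    {n : ℕ} (M : Matrix (Fin n) (Fin n) A) :
    D M.det = ∑ i, ∑ j, M.adjugate j i * D (M i j) := by
  have h1 : D M.det = ∑ j, (M.updateCol j (fun i => D (M i j))).det := by
    rw [Matrix.det_apply, map_sum]
    simp only [Matrix.det_apply]
    rw [Finset.sum_comm]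
    apply Finset.sum_congr rfl
    intro σ _
    rw [← Finset.smul_sum]
    have : D (Equiv.Perm.sign σ • ∏ i, M (σ i) i) = Equiv.Perm.sign σ • D (∏ i, M (σ i) i) := by
      rcases Int.units_eq_one_or (Equiv.Perm.sign σ) with h | h <;> simp [h]
    rw [this, der_prod]
    congr 1
    apply Finset.sum_congr rfl
    intro j _
    rw [← Finset.mul_prod_erase _ _ (Finset.mem_univ j), mul_comm]
    congr 1
    · simp
    · apply Finset.prod_congr rfl
      intro k hk
      rw [Matrix.updateCol_ne (Finset.ne_of_mem_erase hk)]
  rw [h1, Finset.sum_comm]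
  apply Finset.sum_congr rfl
  intro j _
  rw [← Matrix.cramer_apply, Matrix.cramer_eq_adjugate_mulVec, Matrix.mulVec, dotProduct]

section
variable (K : Type) [Field K] (P : Set Circle1)

def brD (b : SwapRing K P) : Derivation K (SwapRing K P) (SwapRing K P) :=
  MvPolynomial.mkDerivation K
    (fun g : SwapIdx P => (MvPolynomial.mkDerivation K (genBr K P 1 0 g)) b)

def brR (a : SwapRing K P) : Derivation K (SwapRing K P) (SwapRing K P) where
  toFun b := swapBr K P 1 0 a b
  map_add' b c := by
    have : brD K P (b + c) = brD K P b + brD K P c := by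
      apply MvPolynomial.derivation_ext
      intro g
      simp [brD]
    exact DFunLike.congr_fun this a
  map_smul' k b := by
    have : brD K P (k • b) = k • brD K P b := by
      apply MvPolynomial.derivation_ext
      intro g
      simp [brD]
    exact DFunLike.congr_fun this a
  map_one_eq_zero' := by
    have : brD K P 1 = 0 := by
      apply MvPolynomial.derivation_ext
      intro g
      simp [brD]
    exact DFunLike.congr_fun this a
  leibniz' b c := by
    have : brD K P (b * c) = b • brD K P c + c • brD K P b := by
      apply MvPolynomial.derivation_ext
      intro g
      simp [brD]
    exact DFunLike.congr_fun this a

lemma brD_apply (a b : SwapRing K P) : brD K P b a = swapBr K P 1 0 a b := rfl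
lemma brR_apply (a b : SwapRing K P) : brR K P a b = swapBr K P 1 0 a b := rfl

def dPhi (o : Circle1) : Derivation K (SwapRing K P) (SwapRing K P) :=
  MvPolynomial.mkDerivation K
    (fun g : SwapIdx P => (phiZ o g.1.1 g.1.2 : SwapRing K P) * MvPolynomial.X g)

lemma dPhi_gen (o : Circle1) (r s : ↥P) :
    dPhi K P o (gen K P r s) = (phiZ o r s : SwapRing K P) * gen K P r s := by
  unfold gen
  split_ifs with h
  · simp [dPhi]
  · simp

lemma swapBr_gen [CharZero K] (o : Circle1) (r x s y : ↥P) :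
    2 * swapBr K P 1 0 (gen K P r x) (gen K P s y) =
      ((phiZ o r s + phiZ o x y - phiZ o r y - phiZ o x s : ℤ) : SwapRing K P)
        * (gen K P r y * gen K P s x) := by
  by_cases h1 : r = x
  · subst h1
    have : gen K P r r = 0 := by simp [gen]
    rw [this, ← brD_apply, map_zero]
    rw [show phiZ o r s + phiZ o r y - phiZ o r y - phiZ o r s = 0 by ring]
    simp
  by_cases h2 : s = y
  · subst h2
    have : gen K P s s = 0 := by simp [gen]
    rw [this, ← brR_apply, map_zero]
    rw [show phiZ o r s + phiZ o x s - phiZ o r s - phiZ o x s = 0 by ring]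
    simp
  have e1 : gen K P r x = MvPolynomial.X (⟨(r, x), h1⟩ : SwapIdx P) := by simp [gen, h1]
  have e2 : gen K P s y = MvPolynomial.X (⟨(s, y), h2⟩ : SwapIdx P) := by simp [gen, h2]
  rw [e1, e2]
  have hq := linkQ_phi o r x s y
  have hK : (2:K) * ((linkQ r x s y : ℚ) : K)
      = ((phiZ o r s + phiZ o x y - phiZ o r y - phiZ o x s : ℤ) : K) := by
    have := congrArg (fun q : ℚ => (q : K)) hq
    push_cast at this ⊢
    exact this
  unfold swapBr
  rw [MvPolynomial.mkDerivation_X, MvPolynomial.mkDerivation_X]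
  unfold genBr
  rw [zero_smul, add_zero, one_smul, MvPolynomial.smul_eq_C_mul, ← mul_assoc]
  congr 1
  have h2' : (2 : SwapRing K P) = MvPolynomial.C 2 := (map_ofNat MvPolynomial.C 2).symm
  rw [h2', ← MvPolynomial.C_mul, hK]
  simp

def SwRel (o : Circle1) (A B : SwapRing K P) (T s s' : ℤ) : Prop :=
  2 * swapBr K P 1 0 A B = (T : SwapRing K P) * A * B + s * A * dPhi K P o B
    - s' * dPhi K P o A * B

lemma SwRel.mul_left {o : Circle1} {A A' B : SwapRing K P} {T T' s s1 s' : ℤ}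
    (h : SwRel K P o A B T s s') (h' : SwRel K P o A' B T' s1 s') :
    SwRel K P o (A * A') B (T + T') (s + s1) s' := by
  unfold SwRel at *
  rw [← brD_apply] at *
  rw [Derivation.leibniz, Derivation.leibniz]
  simp only [smul_eq_mul]
  push_cast
  linear_combination A' * h + A * h'

lemma SwRel.mul_right {o : Circle1} {A B B' : SwapRing K P} {T T' s s' s1 : ℤ}
    (h : SwRel K P o A B T s s') (h' : SwRel K P o A B' T' s s1) :
    SwRel K P o A (B * B') (T + T') s (s' + s1) := by
  unfold SwRel at *
  rw [← brR_apply] at *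
  rw [Derivation.leibniz, Derivation.leibniz]
  simp only [smul_eq_mul]
  push_cast
  linear_combination B' * h + B * h'

end

section
open Matrix

lemma four_one {R : Type*} [CommRing R] {n : ℕ} (A B : Matrix (Fin n) (Fin n) R)
    (p : Fin n → Fin n → R) :
    ∑ i, ∑ j, ∑ k, ∑ l, A.adjugate j i * B.adjugate l k * (p i k * (A i l * B k j)) =
      ∑ i, ∑ k, p i k * ((B * A.adjugate) k i * (A * B.adjugate) i k) := by
  apply Finset.sum_congr rfl; intro i _
  rw [Finset.sum_comm]
  apply Finset.sum_congr rfl; intro k _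
  rw [Matrix.mul_apply, Matrix.mul_apply, Finset.sum_mul_sum, Finset.mul_sum]
  apply Finset.sum_congr rfl; intro j _
  rw [Finset.mul_sum]
  apply Finset.sum_congr rfl; intro l _
  ring

lemma four_two {R : Type*} [CommRing R] {n : ℕ} (A B : Matrix (Fin n) (Fin n) R)
    (q : Fin n → Fin n → R) (hq : ∀ j, q j j = 0) :
    ∑ i, ∑ j, ∑ k, ∑ l, A.adjugate j i * B.adjugate l k * (q j l * (A i l * B k j)) = 0 := by
  have : ∑ i, ∑ j, ∑ k, ∑ l, A.adjugate j i * B.adjugate l k * (q j l * (A i l * B k j))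
      = ∑ j, ∑ l, q j l * ((A.adjugate * A) j l * (B.adjugate * B) l j) := by
    rw [Finset.sum_comm]
    apply Finset.sum_congr rfl; intro j _
    simp_rw [Matrix.mul_apply, Finset.sum_mul_sum, Finset.mul_sum]
    conv_rhs => rw [Finset.sum_comm]
    apply Finset.sum_congr rfl; intro i _
    rw [Finset.sum_comm]
    apply Finset.sum_congr rfl; intro l _
    apply Finset.sum_congr rfl; intro k _
    ring
  rw [this]
  apply Finset.sum_eq_zero; intro j _
  apply Finset.sum_eq_zero; intro l _
  rw [Matrix.adjugate_mul]
  by_cases h : j = l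
  · subst h; rw [hq]; ring
  · rw [Matrix.smul_apply, Matrix.one_apply_ne h]; simp

lemma four_three {R : Type*} [CommRing R] {n : ℕ} (A B : Matrix (Fin n) (Fin n) R)
    (q : Fin n → Fin n → R) :
    ∑ i, ∑ j, ∑ k, ∑ l, A.adjugate j i * B.adjugate l k * (q i l * (A i l * B k j))
      = B.det * ∑ i, ∑ j, A.adjugate j i * (q i j * A i j) := by
  have : ∑ i, ∑ j, ∑ k, ∑ l, A.adjugate j i * B.adjugate l k * (q i l * (A i l * B k j))
      = ∑ i, ∑ j, ∑ l, A.adjugate j i * (q i l * A i l) * (B.adjugate * B) l j := by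
    apply Finset.sum_congr rfl; intro i _
    apply Finset.sum_congr rfl; intro j _
    rw [Finset.sum_comm]
    apply Finset.sum_congr rfl; intro l _
    rw [Matrix.mul_apply, Finset.mul_sum]
    apply Finset.sum_congr rfl; intro k _
    ring
  rw [this, Finset.mul_sum]
  apply Finset.sum_congr rfl; intro i _
  rw [Finset.mul_sum]
  apply Finset.sum_congr rfl; intro j _
  rw [Finset.sum_eq_single j]
  · rw [Matrix.adjugate_mul]; simp; ring
  · intro l _ h
    rw [Matrix.adjugate_mul, Matrix.smul_apply, Matrix.one_apply_ne h]; simp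
  · simp

lemma four_four {R : Type*} [CommRing R] {n : ℕ} (A B : Matrix (Fin n) (Fin n) R)
    (q : Fin n → Fin n → R) :
    ∑ i, ∑ j, ∑ k, ∑ l, A.adjugate j i * B.adjugate l k * (q k j * (A i l * B k j))
      = A.det * ∑ i, ∑ j, B.adjugate j i * (q i j * B i j) := by
  rw [← four_three B A q]
  have e : ∀ f : Fin n → Fin n → Fin n → Fin n → R,
      ∑ i, ∑ j, ∑ k, ∑ l, f i j k l = ∑ k, ∑ l, ∑ i, ∑ j, f i j k l := by
    intro f
    calc ∑ i, ∑ j, ∑ k, ∑ l, f i j k l = ∑ i, ∑ k, ∑ j, ∑ l, f i j k l :=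
          Finset.sum_congr rfl fun i _ => Finset.sum_comm
      _ = ∑ k, ∑ i, ∑ j, ∑ l, f i j k l := Finset.sum_comm
      _ = ∑ k, ∑ i, ∑ l, ∑ j, f i j k l :=
          Finset.sum_congr rfl fun k _ => Finset.sum_congr rfl fun i _ => Finset.sum_comm
      _ = ∑ k, ∑ l, ∑ i, ∑ j, f i j k l := Finset.sum_congr rfl fun i _ => Finset.sum_comm
  rw [e]
  apply Finset.sum_congr rfl; intro i _
  apply Finset.sum_congr rfl; intro j _
  apply Finset.sum_congr rfl; intro k _
  apply Finset.sum_congr rfl; intro l _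
  ring

variable (K : Type) [Field K] (P : Set Circle1)

def gMat {n : ℕ} (a v : Fin n → ↥P) : Matrix (Fin n) (Fin n) (SwapRing K P) :=
  Matrix.of fun i j => gen K P (a i) (v j)

lemma swapBr_det_s12 [CharZero K] (o : Circle1) {n : ℕ} (a b v : Fin n → ↥P) :
    2 * swapBr K P 1 0 (Dmat K P n a v) (Dmat K P n b v) =
      (∑ i, ∑ k, (phiZ o (a i) (b k) : SwapRing K P) *
        ((gMat K P b v * (gMat K P a v).adjugate) k i
          * (gMat K P a v * (gMat K P b v).adjugate) i k))
      + Dmat K P n a v * dPhi K P o (Dmat K P n b v)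
      - dPhi K P o (Dmat K P n a v) * Dmat K P n b v := by
  have hd : ∀ a : Fin n → ↥P, dPhi K P o (Dmat K P n a v) =
      ∑ i, ∑ j, (gMat K P a v).adjugate j i *
        ((phiZ o (a i) (v j) : SwapRing K P) * gMat K P a v i j) := by
    intro a
    change dPhi K P o (gMat K P a v).det = _
    rw [der_det]
    apply Finset.sum_congr rfl; intro i _
    apply Finset.sum_congr rfl; intro j _
    congr 1
    exact dPhi_gen K P o _ _
  have h4 := four_four (gMat K P a v) (gMat K P b v) (fun k j => (phiZ o (b k) (v j) : SwapRing K P))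
  have h3 := four_three (gMat K P a v) (gMat K P b v) (fun k j => (phiZ o (a k) (v j) : SwapRing K P))
  have h2 := four_two (gMat K P a v) (gMat K P b v) (fun k j => (phiZ o (v k) (v j) : SwapRing K P))
    (by intro j; simp [phiZ_self])
  have h1 := four_one (gMat K P a v) (gMat K P b v) (fun k j => (phiZ o (a k) (b j) : SwapRing K P))
  rw [hd, hd]
  change 2 * swapBr K P 1 0 (gMat K P a v).det (gMat K P b v).det = 
    _ + (gMat K P a v).det * _ - _ * (gMat K P b v).det
  rw [mul_comm _ (gMat K P b v).det, ← h3, ← h4, ← h1]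
  rw [← add_zero (∑ i, ∑ j, ∑ k, ∑ l, (gMat K P a v).adjugate j i * (gMat K P b v).adjugate l k *
    ((phiZ o (a i) (b k) : SwapRing K P) * (gMat K P a v i l * gMat K P b v k j))), ← h2]
  rw [← brD_apply, der_det, Finset.mul_sum]
  simp only [← Finset.sum_add_distrib, ← Finset.sum_sub_distrib]
  apply Finset.sum_congr rfl; intro i _
  rw [Finset.mul_sum]
  apply Finset.sum_congr rfl; intro j _
  rw [brD_apply, ← brR_apply, der_det, Finset.mul_sum, Finset.mul_sum]
  apply Finset.sum_congr rfl; intro k _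
  rw [Finset.mul_sum, Finset.mul_sum]
  apply Finset.sum_congr rfl; intro l _
  rw [brR_apply]
  have := swapBr_gen K P o (a i) (v j) (b k) (v l)
  have e := phiZ_antisymm o (v j) (b k)
  rw [e] at this
  push_cast at this
  change 2 * swapBr K P 1 0 (gMat K P a v i j) (gMat K P b v k l) =
    _ * (gMat K P a v i l * gMat K P b v k j) at this
  linear_combination (gMat K P a v).adjugate j i * (gMat K P b v).adjugate l k * this

/-- main evaluation of the bracket of two determinants -/
lemma swRel_det [CharZero K] (o : Circle1) {n : ℕ} (a b v : Fin n → ↥P) (e : Fin n → ℤ)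
    (h : ∀ i k, a i ∉ Set.range b → b k ∉ Set.range a → phiZ o (a i) (b k) = e k) :
    SwRel K P o (Dmat K P n a v) (Dmat K P n b v)
      (∑ k, if b k ∈ Set.range a then 0 else e k) 1 1 := by
  unfold SwRel
  rw [swapBr_det_s12 K P o]
  have key : (∑ i, ∑ k, (phiZ o (a i) (b k) : SwapRing K P) *
        ((gMat K P b v * (gMat K P a v).adjugate) k i
          * (gMat K P a v * (gMat K P b v).adjugate) i k)) =
      ((∑ k, if b k ∈ Set.range a then 0 else e k : ℤ) : SwapRing K P)
        * Dmat K P n a v * Dmat K P n b v := by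
    set c : Fin n → ℤ := fun k => if b k ∈ Set.range a then 0 else e k with hc
    have hrow : ∀ (a b : Fin n → ↥P) (i k k' : Fin n), a i = b k' → k' ≠ k →
        (gMat K P a v * (gMat K P b v).adjugate) i k = 0 := by
      intro a b i k k' hab hk
      have : (gMat K P a v * (gMat K P b v).adjugate) i k
          = (gMat K P b v * (gMat K P b v).adjugate) k' k := by
        simp only [Matrix.mul_apply, gMat, Matrix.of_apply, hab]
      rw [this, Matrix.mul_adjugate, Matrix.smul_apply, Matrix.one_apply_ne hk, smul_zero]
    have h1 : ∀ i k, (phiZ o (a i) (b k) : SwapRing K P) *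
        ((gMat K P b v * (gMat K P a v).adjugate) k i
          * (gMat K P a v * (gMat K P b v).adjugate) i k) = (c k : SwapRing K P) *
        ((gMat K P b v * (gMat K P a v).adjugate) k i
          * (gMat K P a v * (gMat K P b v).adjugate) i k) := by
      intro i k
      by_cases hb : b k ∈ Set.range a
      · obtain ⟨i', hi'⟩ := hb
        by_cases hii : i' = i
        · subst hii
          have : c k = 0 := by simp [hc, ← hi']
          rw [this, hi', phiZ_self]
        · rw [hrow b a k i i' hi'.symm hii]; ring
      · by_cases ha : a i ∈ Set.range b
        · obtain ⟨k', hk'⟩ := ha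
          have : k' ≠ k := by
            rintro rfl; exact hb ⟨i, hk'.symm⟩
          rw [hrow a b i k k' hk'.symm this]; ring
        · have hck : c k = e k := if_neg hb
          rw [h i k ha hb, hck]
    simp_rw [h1]
    rw [Finset.sum_comm]
    push_cast
    rw [Finset.sum_mul, Finset.sum_mul]
    apply Finset.sum_congr rfl; intro k _
    rw [← Finset.mul_sum, ← Matrix.mul_apply, mul_assoc (c k : SwapRing K P)]
    congr 1
    rw [Matrix.mul_assoc, ← Matrix.mul_assoc (gMat K P a v).adjugate, Matrix.adjugate_mul,
      Matrix.smul_mul, Matrix.one_mul, Matrix.mul_smul, Matrix.mul_adjugate]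
    simp [Dmat, gMat]
  rw [key]
  push_cast
  ring

end

lemma mem_range_rows3s {α : Type*} {n : ℕ} (hn : 1 ≤ n) (x y z : ℕ → α) (a b : ℕ) (w : α)
    (hab : a + b ≤ n - 1) (p : α) :
    p ∈ Set.range (rows3s x y z a b w : Fin n → α) ↔
      (∃ j < a, p = x j) ∨ (∃ j < b, p = y j) ∨ (∃ j < n - 1 - a - b, p = z j) ∨ p = w := by
  constructor
  · rintro ⟨k, rfl⟩
    unfold rows3s
    have hk := k.2
    split_ifs with h1 h2 h3
    · exact Or.inl ⟨_, h1, rfl⟩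
    · exact Or.inr (Or.inl ⟨_, by omega, rfl⟩)
    · exact Or.inr (Or.inr (Or.inl ⟨_, by omega, rfl⟩))
    · exact Or.inr (Or.inr (Or.inr rfl))
  · rintro (⟨j, hj, rfl⟩ | ⟨j, hj, rfl⟩ | ⟨j, hj, rfl⟩ | rfl)
    · refine ⟨⟨j, by omega⟩, ?_⟩
      simp [rows3s, hj]
    · refine ⟨⟨a + j, by omega⟩, ?_⟩
      simp [rows3s, hj]
    · refine ⟨⟨a + b + j, by omega⟩, ?_⟩
      have h1 : ¬ (a + b + j < a) := by omega
      have h3 : a + b + j < n - 1 := by omega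
      simp [rows3s, h1, h3]
    · refine ⟨⟨n - 1, by omega⟩, ?_⟩
      have h1 : ¬ (n - 1 < a) := by omega
      have h2 : ¬ (n - 1 < a + b) := by omega
      simp [rows3s, h1, h2]

def InTri {α : Type*} (x y z : ℕ → α) (a b c : ℕ) (p : α) : Prop :=
  (∃ j < a, p = x j) ∨ (∃ j < b, p = y j) ∨ (∃ j < c, p = z j)

lemma exists_lt_succ' {α : Type*} (x : ℕ → α) (a : ℕ) (p : α) :
    (∃ j < a + 1, p = x j) ↔ (∃ j < a, p = x j) ∨ p = x a := by
  constructor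
  · rintro ⟨j, hj, rfl⟩
    by_cases h : j = a
    · subst h; exact Or.inr rfl
    · exact Or.inl ⟨j, by omega, rfl⟩
  · rintro (⟨j, hj, rfl⟩ | rfl)
    · exact ⟨j, by omega, rfl⟩
    · exact ⟨a, by omega, rfl⟩

lemma tri_x {α : Type*} {n : ℕ} (x y z : ℕ → α) (a b c : ℕ) (h : a + b + c + 1 = n) (p : α) :
    p ∈ Set.range (rows3s x y z a b (x a) : Fin n → α) ↔ InTri x y z (a+1) b c p := by
  rw [mem_range_rows3s (by omega) _ _ _ _ _ _ (by omega), InTri, exists_lt_succ',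
    show n - 1 - a - b = c by omega]
  simp only [or_assoc, or_comm, or_left_comm]

lemma tri_y {α : Type*} {n : ℕ} (x y z : ℕ → α) (a b c : ℕ) (h : a + b + c + 1 = n) (p : α) :
    p ∈ Set.range (rows3s x y z a b (y b) : Fin n → α) ↔ InTri x y z a (b+1) c p := by
  rw [mem_range_rows3s (by omega) _ _ _ _ _ _ (by omega), InTri, exists_lt_succ',
    show n - 1 - a - b = c by omega]
  simp only [or_assoc, or_comm, or_left_comm]

lemma tri_z {α : Type*} {n : ℕ} (x y z : ℕ → α) (a b c : ℕ) (h : a + b + c + 1 = n) (p : α) :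
    p ∈ Set.range (rows3s x y z a b (z c) : Fin n → α) ↔ InTri x y z a b (c+1) p := by
  rw [mem_range_rows3s (by omega) _ _ _ _ _ _ (by omega), InTri, exists_lt_succ' z,
    show n - 1 - a - b = c by omega]

lemma phiZ_pos {o p q : Circle1} (h : coordAt o p < coordAt o q) : phiZ o p q = 1 := by
  unfold phiZ; rw [if_neg (by linarith), if_pos h]

lemma phiZ_neg {o p q : Circle1} (h : coordAt o q < coordAt o p) : phiZ o p q = -1 := by
  unfold phiZ; rw [if_pos h]

/-- `f` precedes `g` -/
def Prec {P : Set Circle1} (o : Circle1) (N : ℕ) (f g : ℕ → ↥P) : Prop :=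
  ∀ j < N, ∀ k < N, coordAt o (f j) < coordAt o (g k)

section
variable (K : Type) [Field K] [CharZero K] (P : Set Circle1)

/-- Brackets with one edge determinant. -/
lemma one_edge (o : Circle1) (N : ℕ) (x y z : ℕ → ↥P)
    (hxy : Prec o N x y) (hxz : Prec o N x z) (hyz : Prec o N y z)
    (a v : Fin (N+1) → ↥P) (α β γ : ℕ) (hα : α ≤ N) (hβ : β ≤ N) (hγ : γ ≤ N)
    (ha : ∀ p, p ∈ Set.range a ↔ InTri x y z α β γ p)
    (i q : ℕ) (hiq : i + q = N) (w : ↥P) (s : ℤ)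
    (hw : w ∉ Set.range a → ∀ p, InTri x y z α β γ p →
      p ∉ Set.range (rows3s x z x i q w : Fin (N+1) → ↥P) → phiZ o p w = s) :
    SwRel K P o (Dmat K P (N+1) a v) (Dmat K P (N+1) (rows3s x z x i q w) v)
      ((∑ k : Fin N, if (if (k:ℕ) < i then x k else z (k - i)) ∈ Set.range a then 0
        else (if (k:ℕ) < i then (-1 : ℤ) else 1)) + (if w ∈ Set.range a then 0 else s)) 1 1 := by
  have hb : ∀ p, p ∈ Set.range (rows3s x z x i q w : Fin (N+1) → ↥P) ↔
      (∃ j < i, p = x j) ∨ (∃ j < q, p = z j) ∨ p = w := by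
    intro p
    rw [mem_range_rows3s (by omega) _ _ _ _ _ _ (by omega)]
    have : N + 1 - 1 - i - q = 0 := by omega
    rw [this]
    simp
  have hbk : ∀ k : Fin N, (rows3s x z x i q w : Fin (N+1) → ↥P) k.castSucc =
      if (k:ℕ) < i then x k else z (k - i) := by
    intro k
    have : (k : ℕ) < i + q := by omega
    simp [rows3s, this]
  have hbl : (rows3s x z x i q w : Fin (N+1) → ↥P) (Fin.last N) = w := by
    have h1 : ¬ N < i := by omega
    have h2 : ¬ N < i + q := by omega
    simp [rows3s, h1, h2]
  have main := swRel_det K P o a (rows3s x z x i q w) v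
    (Fin.lastCases s (fun k : Fin N => if (k:ℕ) < i then (-1 : ℤ) else 1)) ?_
  · rw [Fin.sum_univ_castSucc] at main
    simp only [Fin.lastCases_castSucc, Fin.lastCases_last, hbk, hbl] at main
    exact main
  · intro r k hr hk
    have har : InTri x y z α β γ (a r) := (ha _).1 ⟨r, rfl⟩
    induction k using Fin.lastCases with
    | last =>
      rw [hbl] at hk ⊢
      rw [Fin.lastCases_last]
      exact hw hk _ har hr
    | cast k =>
      rw [hbk] at hk ⊢
      rw [Fin.lastCases_castSucc]
      rw [hb] at hr
      rw [ha] at hk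
      push Not at hr
      have hkN := k.2
      split_ifs with hki
      · rw [if_pos hki] at hk
        have hαk : α ≤ k := by
          by_contra hcon
          exact hk (Or.inl ⟨k, by omega, rfl⟩)
        rcases har with ⟨j, hj, hj'⟩ | ⟨j, hj, hj'⟩ | ⟨j, hj, hj'⟩
        · exact absurd hj' (hr.1 j (by omega))
        · rw [hj']; exact phiZ_neg (hxy _ hkN _ (by omega))
        · rw [hj']; exact phiZ_neg (hxz _ hkN _ (by omega))
      · rw [if_neg hki] at hk
        have hγk : γ ≤ k - i := by
          by_contra hcon
          exact hk (Or.inr (Or.inr ⟨k - i, by omega, rfl⟩))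
        rcases har with ⟨j, hj, hj'⟩ | ⟨j, hj, hj'⟩ | ⟨j, hj, hj'⟩
        · rw [hj']; exact phiZ_pos (hxz _ (by omega) _ (by omega))
        · rw [hj']; exact phiZ_pos (hyz _ (by omega) _ (by omega))
        · exact absurd hj' (hr.2.1 j (by omega))

lemma edge_pair (o : Circle1) (n : ℕ) (hn : 2 ≤ n) (x y z t : ℕ → ↥P)
    (hxy : Prec o (n-1) x y) (hxz : Prec o (n-1) x z) (hyz : Prec o (n-1) y z)
    (hxt : Prec o (n-1) x t) (hyt : Prec o (n-1) y t) (hzt : Prec o (n-1) z t)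
    (a v : Fin n → ↥P) (α β γ : ℕ) (hα : α ≤ n-1) (hβ : β ≤ n-1) (hγ : γ ≤ n-1)
    (hs : α + β + γ = n)
    (ha : ∀ p, p ∈ Set.range a ↔ InTri x y z α β γ p)
    (i q : ℕ) (hiq : i + q = n-1) :
    ∃ C : ℤ, SwRel K P o (Dmat K P n a v) (Dmat K P n (rows3s x z x i q (t 0)) v) (C + 1) 1 1 ∧
      SwRel K P o (Dmat K P n a v) (Dmat K P n (rows3s x z x i q (y 0)) v)
        (C + 1 - if 1 ≤ β then 1 else if i < α then 0 else 2) 1 1 := by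
  obtain ⟨N, rfl⟩ : ∃ N, n = N + 1 := ⟨n - 1, by omega⟩
  simp only [Nat.add_sub_cancel] at *
  refine ⟨(∑ k : Fin N, if (if (k:ℕ) < i then x k else z (k - i)) ∈ Set.range a then 0
        else (if (k:ℕ) < i then (-1 : ℤ) else 1)), ?_, ?_⟩
  · have h1 := one_edge K P o N x y z hxy hxz hyz a v α β γ hα hβ hγ ha i q hiq (t 0) 1 ?_
    · rw [if_neg] at h1
      · exact h1
      · rw [ha]
        rintro (⟨j, hj, hj'⟩ | ⟨j, hj, hj'⟩ | ⟨j, hj, hj'⟩)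
        · exact absurd (hxt j (by omega) 0 (by omega)) (by rw [hj']; exact lt_irrefl _)
        · exact absurd (hyt j (by omega) 0 (by omega)) (by rw [hj']; exact lt_irrefl _)
        · exact absurd (hzt j (by omega) 0 (by omega)) (by rw [hj']; exact lt_irrefl _)
    · intro _ p hp _
      rcases hp with ⟨j, hj, rfl⟩ | ⟨j, hj, rfl⟩ | ⟨j, hj, rfl⟩
      · exact phiZ_pos (hxt j (by omega) 0 (by omega))
      · exact phiZ_pos (hyt j (by omega) 0 (by omega))
      · exact phiZ_pos (hzt j (by omega) 0 (by omega))
  · have h1 := one_edge K P o N x y z hxy hxz hyz a v α β γ hα hβ hγ ha i q hiq (y 0)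
      (if i < α then 1 else -1) ?_
    · by_cases hb : 1 ≤ β
      · rw [if_pos ((ha _).2 (Or.inr (Or.inl ⟨0, by omega, rfl⟩)))] at h1
        rw [if_pos hb]
        simpa using h1
      · rw [if_neg hb]
        rw [if_neg (c := y 0 ∈ Set.range a)] at h1
        · split_ifs at h1 ⊢
          · simpa using h1
          · convert h1 using 1
            ring
        · rw [ha]
          rintro (⟨j, hj, hj'⟩ | ⟨j, hj, hj'⟩ | ⟨j, hj, hj'⟩)
          · exact absurd (hxy j (by omega) 0 (by omega)) (by rw [hj']; exact lt_irrefl _)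
          · omega
          · exact absurd (hyz 0 (by omega) j (by omega)) (by rw [hj']; exact lt_irrefl _)
    · intro hy0 p hp hpb
      have hb0 : β = 0 := by
        by_contra hcon
        exact hy0 ((ha _).2 (Or.inr (Or.inl ⟨0, by omega, rfl⟩)))
      rw [mem_range_rows3s (by omega) _ _ _ _ _ _ (by omega)] at hpb
      push Not at hpb
      rcases hp with ⟨j, hj, hj'⟩ | ⟨j, hj, hj'⟩ | ⟨j, hj, hj'⟩
      · have : i ≤ j := by
          by_contra hcon
          exact hpb.1 j (by omega) hj'
        rw [if_pos (by omega), hj']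
        exact phiZ_pos (hxy j (by omega) 0 (by omega))
      · omega
      · have : q ≤ j := by
          by_contra hcon
          exact hpb.2.1 j (by omega) hj'
        rw [if_neg (by omega), hj']
        exact phiZ_neg (hyz 0 (by omega) j (by omega))

/-- Bracket of a triangle determinant with the numerator and denominator of the edge function. -/
lemma edge_total (o : Circle1) (n : ℕ) (hn : 2 ≤ n) (x y z t : ℕ → ↥P)
    (hxy : Prec o (n-1) x y) (hxz : Prec o (n-1) x z) (hyz : Prec o (n-1) y z)
    (hxt : Prec o (n-1) x t) (hyt : Prec o (n-1) y t) (hzt : Prec o (n-1) z t)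
    (i : ℕ) (hi1 : 1 ≤ i) (hi2 : i ≤ n - 1) (v : Fin n → ↥P)
    (a : Fin n → ↥P) (α β γ : ℕ) (hα : α ≤ n-1) (hβ : β ≤ n-1) (hγ : γ ≤ n-1)
    (hs : α + β + γ = n)
    (ha : ∀ p, p ∈ Set.range a ↔ InTri x y z α β γ p) :
    ∃ T : ℤ, SwRel K P o (Dmat K P n a v) (Dmat K P n (rows3s x z x i (n-i-1) (t 0)) v *
        Dmat K P n (rows3s x z x (i-1) (n-i) (y 0)) v)
        (T + if β = 0 ∧ α = i then 2 else 0) 1 2 ∧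
      SwRel K P o (Dmat K P n a v) (Dmat K P n (rows3s x z x i (n-i-1) (y 0)) v *
        Dmat K P n (rows3s x z x (i-1) (n-i) (t 0)) v) T 1 2 := by
  obtain ⟨C, h1, h2⟩ := edge_pair K P o n hn x y z t hxy hxz hyz hxt hyt hzt a v α β γ hα hβ hγ hs
    ha i (n-i-1) (by omega)
  obtain ⟨C', h1', h2'⟩ := edge_pair K P o n hn x y z t hxy hxz hyz hxt hyt hzt a v α β γ hα hβ hγ
    hs ha (i-1) (n-i) (by omega)
  have e1 := h1.mul_right K P h2'
  have e2 := h2.mul_right K P h1'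
  rw [one_add_one_eq_two] at e1 e2
  refine ⟨_, ?_, e2⟩
  have e : ((C + 1 - if 1 ≤ β then 1 else if i < α then 0 else 2) + (C' + 1)
      + if β = 0 ∧ α = i then 2 else 0 : ℤ)
      = (C + 1 + (C' + 1 - if 1 ≤ β then 1 else if i - 1 < α then 0 else 2)) := by
    split_ifs <;> omega
  rw [e]
  exact e1

end

lemma mem_descPts_map {P : Set Circle1} (f : ℕ → ↥P) (g : Circle1 → ℝ) (N j : ℕ) (hj : j < N) :
    g (f j) ∈ (descPts (fun i => ((f i : Circle1))) N).map g := by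
  rw [List.mem_map]
  refine ⟨_, ?_, rfl⟩
  simp only [descPts, List.mem_reverse, List.mem_map, List.mem_range]
  exact ⟨j, hj, rfl⟩

lemma cfg_prec {P : Set Circle1} {N : ℕ} {x y z t : ℕ → ↥P}
    (hcfg : AnticlockwiseList
      (descPts (fun i => ((x i : Circle1))) N ++ descPts (fun i => ((y i : Circle1))) N
        ++ descPts (fun i => ((z i : Circle1))) N
        ++ descPts (fun i => ((t i : Circle1))) N)) :
    ∃ o, Prec o N x y ∧ Prec o N x z ∧ Prec o N y z ∧ Prec o N x t ∧ Prec o N y t ∧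
      Prec o N z t := by
  obtain ⟨o, -, h⟩ := hcfg
  refine ⟨o, ?_⟩
  have h := List.isChain_iff_pairwise.1 h
  rw [List.map_append, List.map_append, List.map_append, List.pairwise_append,
    List.pairwise_append, List.pairwise_append] at h
  obtain ⟨⟨⟨-, -, h1⟩, -, h2⟩, -, h3⟩ := h
  refine ⟨?_, ?_, ?_, ?_, ?_, ?_⟩ <;> intro j hj k hk
  · exact h1 _ (mem_descPts_map x _ N j hj) _ (mem_descPts_map y _ N k hk)
  · exact h2 _ (List.mem_append_left _ (mem_descPts_map x _ N j hj)) _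
      (mem_descPts_map z _ N k hk)
  · exact h2 _ (List.mem_append_right _ (mem_descPts_map y _ N j hj)) _
      (mem_descPts_map z _ N k hk)
  · exact h3 _ (List.mem_append_left _ (List.mem_append_left _ (mem_descPts_map x _ N j hj))) _
      (mem_descPts_map t _ N k hk)
  · exact h3 _ (List.mem_append_left _ (List.mem_append_right _ (mem_descPts_map y _ N j hj))) _
      (mem_descPts_map t _ N k hk)
  · exact h3 _ (List.mem_append_right _ (mem_descPts_map z _ N j hj)) _
      (mem_descPts_map t _ N k hk)

section
variable (K : Type) [Field K] [CharZero K] (P : Set Circle1)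


lemma toQn_unit_s12 {n : ℕ} {D : SwapRing K P}
    (h : toZn K P n D ∈ nonZeroDivisors (ZnRing K P n)) : IsUnit (toQn K P n D) :=
  IsLocalization.map_units (QnRing K P n)
    (⟨toZn K P n D, h⟩ : nonZeroDivisors (ZnRing K P n))

lemma EQuot_mul {n : ℕ} (a b v : Fin n → ↥P)
    (h : toZn K P n (Dmat K P n b v) ∈ nonZeroDivisors (ZnRing K P n)) :
    EQuot K P n a b v h * toQn K P n (Dmat K P n b v) = toQn K P n (Dmat K P n a v) := by
  unfold EQuot
  rw [Localization.mk_eq_mk']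
  exact IsLocalization.mk'_spec (QnRing K P n) (toZn K P n (Dmat K P n a v))
    (⟨toZn K P n (Dmat K P n b v), h⟩ : nonZeroDivisors (ZnRing K P n))

lemma two_unit (n : ℕ) : IsUnit (2 : QnRing K P n) := by
  have h : (2 : SwapRing K P) * MvPolynomial.C (1/2 : K) = 1 := by
    have h2' : (2 : SwapRing K P) = MvPolynomial.C 2 := (map_ofNat MvPolynomial.C 2).symm
    rw [h2', ← MvPolynomial.C_mul]
    norm_num
  have hu : IsUnit (2 : SwapRing K P) := isUnit_iff_exists_inv.2 ⟨_, h⟩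
  have h2 := hu.map (toQn K P n)
  rwa [map_ofNat] at h2

lemma final_step (o : Circle1) (n : ℕ) (Bq : QnRing K P n → QnRing K P n → QnRing K P n)
    (hB : IsQnBracket K P n 1 0 Bq) (N D N' D' : SwapRing K P) (Θ B : QnRing K P n)
    (h1 : Θ * toQn K P n D = toQn K P n N) (h2 : B * toQn K P n D' = toQn K P n N')
    (hD : IsUnit (toQn K P n D)) (hD' : IsUnit (toQn K P n D'))
    (T1 T2 T3 T4 s s' e : ℤ)
    (r1 : SwRel K P o N N' T1 s s') (r2 : SwRel K P o D N' T2 s s')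
    (r3 : SwRel K P o N D' T3 s s') (r4 : SwRel K P o D D' T4 s s')
    (he : T1 - T2 - T3 + T4 = 2 * e) : Bq Θ B = e * (Θ * B) := by
  obtain ⟨hb, hl, hr⟩ := hB
  unfold SwRel at r1 r2 r3 r4
  replace r1 := congrArg (toQn K P n) r1
  replace r2 := congrArg (toQn K P n) r2
  replace r3 := congrArg (toQn K P n) r3
  replace r4 := congrArg (toQn K P n) r4
  simp only [map_mul, map_add, map_sub, map_intCast, map_ofNat, ← hb] at r1 r2 r3 r4
  rw [← h1, ← h2] at r1
  rw [← h2] at r2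
  rw [← h1] at r3
  rw [hl, hr, hr] at r1
  rw [hr] at r2
  rw [hl] at r3
  generalize toQn K P n (dPhi K P o N) = dN at *
  generalize toQn K P n (dPhi K P o D) = dD at *
  generalize toQn K P n (dPhi K P o N') = dN' at *
  generalize toQn K P n (dPhi K P o D') = dD' at *
  have he' : (T1 - T2 - T3 + T4 : QnRing K P n) = 2 * e := by exact_mod_cast congrArg (Int.cast (R := QnRing K P n)) he
  apply (two_unit K P n).mul_left_cancel
  apply hD.mul_left_cancel
  apply hD'.mul_left_cancel
  linear_combination r1 - Θ * r2 - B * r3 + Θ * B * r4 +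
    Θ * B * toQn K P n D * toQn K P n D' * he'

end

/-- In the quadrilateral configuration
`x_{n-1} ≺ … ≺ x_1 ≺ y_{n-1} ≺ … ≺ y_1 ≺ z_{n-1} ≺ … ≺ z_1 ≺ t_{n-1} ≺ … ≺ t_1` of
pairwise distinct points of `P` ordered anticlockwise, with `Θ(m,l,p)` the image of the
`(m,l,p)`-triple ratio of the triangle `xyz` and `B_i` the image of the `(i,n-i)`-edge
function of the edge `xz`, the normalized extended swapping bracket `[Θ(m,l,p), B_i]`
equals `-1` if `(m,l,p) = (i-1, 1, n-i)`, equals `1` if `(m,l,p) = (i, 1, n-i-1)`, and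
equals `0` in all other cases. -/
theorem bracket_triple_ratio_edge_function (K : Type) [Field K] [CharZero K]
    (P : Set Circle1) (n : ℕ) (hn : 2 ≤ n) (x y z t : ℕ → ↥P)
    (hcfg : AnticlockwiseList
      (descPts (fun i => ((x i : Circle1))) (n-1) ++ descPts (fun i => ((y i : Circle1))) (n-1)
        ++ descPts (fun i => ((z i : Circle1))) (n-1)
        ++ descPts (fun i => ((t i : Circle1))) (n-1)))
    (m l p : ℕ) (hm : 0 < m) (hl : 0 < l) (hp : 0 < p) (hs : m + l + p = n)
    (i : ℕ) (hi1 : 1 ≤ i) (hi2 : i ≤ n-1) :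
    ∀ Bq : QnRing K P n → QnRing K P n → QnRing K P n, IsQnBracket K P n 1 0 Bq →
    ∀ v : Fin n → ↥P, Function.Injective v →
    ∀ (hA1 : toZn K P n (Dmat K P n (rows3s x y z (m+1) (l-1) (z (p-1))) v)
          ∈ nonZeroDivisors (ZnRing K P n))
      (hA2 : toZn K P n (Dmat K P n (rows3s x y z (m-1) (l+1) (x (m-1))) v)
          ∈ nonZeroDivisors (ZnRing K P n))
      (hA3 : toZn K P n (Dmat K P n (rows3s x y z (m-1) (l-1) (y (l-1))) v)
          ∈ nonZeroDivisors (ZnRing K P n))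
      (hB1 : toZn K P n (Dmat K P n (rows3s x z x i (n-i-1) (y 0)) v)
          ∈ nonZeroDivisors (ZnRing K P n))
      (hB2 : toZn K P n (Dmat K P n (rows3s x z x (i-1) (n-i) (t 0)) v)
          ∈ nonZeroDivisors (ZnRing K P n)),
      ((m, l, p) = (i-1, 1, n-i) →
        Bq (thetaTri K P n x y z m l p v hA1 hA2 hA3)
           (edgeQuot K P n x z (t 0) (y 0) i v hB1 hB2)
          = - (thetaTri K P n x y z m l p v hA1 hA2 hA3
              * edgeQuot K P n x z (t 0) (y 0) i v hB1 hB2)) ∧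
      ((m, l, p) = (i, 1, n-i-1) →
        Bq (thetaTri K P n x y z m l p v hA1 hA2 hA3)
           (edgeQuot K P n x z (t 0) (y 0) i v hB1 hB2)
          = thetaTri K P n x y z m l p v hA1 hA2 hA3
            * edgeQuot K P n x z (t 0) (y 0) i v hB1 hB2) ∧
      ((m, l, p) ≠ (i-1, 1, n-i) ∧ (m, l, p) ≠ (i, 1, n-i-1) →
        Bq (thetaTri K P n x y z m l p v hA1 hA2 hA3)
           (edgeQuot K P n x z (t 0) (y 0) i v hB1 hB2) = 0) := by
  intro Bq hB v _ hA1 hA2 hA3 hB1 hB2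
  obtain ⟨o, hxy, hxz, hyz, hxt, hyt, hzt⟩ := cfg_prec hcfg
  have hE := edge_total K P o n hn x y z t hxy hxz hyz hxt hyt hzt i hi1 hi2 v
  obtain ⟨m, rfl⟩ : ∃ m', m = m' + 1 := ⟨m - 1, by omega⟩
  obtain ⟨l, rfl⟩ : ∃ m', l = m' + 1 := ⟨l - 1, by omega⟩
  obtain ⟨p, rfl⟩ : ∃ m', p = m' + 1 := ⟨p - 1, by omega⟩
  simp only [Nat.add_sub_cancel] at hA1 hA2 hA3
  obtain ⟨a1, f1, g1⟩ := hE _ (m+1+1) (l+1) p (by omega) (by omega) (by omega) (by omega)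
    (tri_y x y z (m+1+1) l p (by omega))
  obtain ⟨a2, f2, g2⟩ := hE _ (m+1+1) l (p+1) (by omega) (by omega) (by omega) (by omega)
    (tri_z x y z (m+1+1) l p (by omega))
  obtain ⟨a3, f3, g3⟩ := hE _ m (l+1+1) (p+1) (by omega) (by omega) (by omega) (by omega)
    (tri_z x y z m (l+1+1) p (by omega))
  obtain ⟨a4, f4, g4⟩ := hE _ (m+1) (l+1+1) p (by omega) (by omega) (by omega) (by omega)
    (tri_x x y z m (l+1+1) p (by omega))
  obtain ⟨a5, f5, g5⟩ := hE _ (m+1) l (p+1+1) (by omega) (by omega) (by omega) (by omega)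
    (tri_x x y z m l (p+1+1) (by omega))
  obtain ⟨a6, f6, g6⟩ := hE _ m (l+1) (p+1+1) (by omega) (by omega) (by omega) (by omega)
    (tri_y x y z m l (p+1+1) (by omega))
  rw [if_neg (by omega), add_zero] at f1
  rw [if_neg (by omega), add_zero] at f3
  rw [if_neg (by omega), add_zero] at f4
  rw [if_neg (by omega), add_zero] at f6
  have r1 := (f1.mul_left K P f3).mul_left K P f5
  have r2 := (f2.mul_left K P f4).mul_left K P f6
  have r3 := (g1.mul_left K P g3).mul_left K P g5
  have r4 := (g2.mul_left K P g4).mul_left K P g6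
  have hΘ : thetaTri K P n x y z (m+1) (l+1) (p+1) v hA1 hA2 hA3 *
      toQn K P n (Dmat K P n (rows3s x y z (m+1+1) l (z p)) v *
        Dmat K P n (rows3s x y z m (l+1+1) (x m)) v * Dmat K P n (rows3s x y z m l (y l)) v)
      = toQn K P n (Dmat K P n (rows3s x y z (m+1+1) l (y l)) v *
        Dmat K P n (rows3s x y z m (l+1+1) (z p)) v * Dmat K P n (rows3s x y z m l (x m)) v) := by
    have e1 := EQuot_mul K P (rows3s x y z (m+1+1) l (y l)) _ v hA1
    have e2 := EQuot_mul K P (rows3s x y z m (l+1+1) (z p)) _ v hA2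
    have e3 := EQuot_mul K P (rows3s x y z m l (x m)) _ v hA3
    rw [map_mul, map_mul, map_mul, map_mul, ← e1, ← e2, ← e3]
    unfold thetaTri
    simp only [Nat.add_sub_cancel]
    ring
  have hBB : edgeQuot K P n x z (t 0) (y 0) i v hB1 hB2 *
      toQn K P n (Dmat K P n (rows3s x z x i (n-i-1) (y 0)) v *
        Dmat K P n (rows3s x z x (i-1) (n-i) (t 0)) v)
      = toQn K P n (Dmat K P n (rows3s x z x i (n-i-1) (t 0)) v *
        Dmat K P n (rows3s x z x (i-1) (n-i) (y 0)) v) := by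
    have e1 := EQuot_mul K P (rows3s x z x i (n-i-1) (t 0)) _ v hB1
    have e2 := EQuot_mul K P (rows3s x z x (i-1) (n-i) (y 0)) _ v hB2
    rw [map_mul, map_mul, ← e1, ← e2]
    unfold edgeQuot
    ring
  have hU : IsUnit (toQn K P n (Dmat K P n (rows3s x y z (m+1+1) l (z p)) v *
        Dmat K P n (rows3s x y z m (l+1+1) (x m)) v * Dmat K P n (rows3s x y z m l (y l)) v)) := by
    rw [map_mul, map_mul]
    exact ((toQn_unit_s12 K P hA1).mul (toQn_unit_s12 K P hA2)).mul (toQn_unit_s12 K P hA3)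
  have hU' : IsUnit (toQn K P n (Dmat K P n (rows3s x z x i (n-i-1) (y 0)) v *
        Dmat K P n (rows3s x z x (i-1) (n-i) (t 0)) v)) := by
    rw [map_mul]
    exact (toQn_unit_s12 K P hB1).mul (toQn_unit_s12 K P hB2)
  have fin := fun e he => final_step K P o n Bq hB _ _ _ _ _ _ hΘ hBB hU hU' _ _ _ _ _ _ e
    r1 r2 r3 r4 he
  refine ⟨?_, ?_, ?_⟩
  · intro h
    simp only [Prod.mk.injEq] at h
    rw [fin (-1) (by split_ifs <;> omega)]
    push_cast
    ring
  · intro h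
    simp only [Prod.mk.injEq] at h
    rw [fin 1 (by split_ifs <;> omega)]
    push_cast
    ring
  · intro h
    simp only [ne_eq, Prod.mk.injEq] at h
    rw [fin 0 (by split_ifs <;> omega)]
    push_cast
    ring

end
end
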